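/- Let a = (0, a_1, a_2, …) be a nondecreasing infinite sequence of integers. Then the map α^a : M_[∞] → M_[∞], defined by α^a(x_{i_1}x_{i_2}⋯x_{i_k}) = x_{i_1} x_{i_2+a_1} x_{i_3+a_2} ⋯ x_{i_k+a_{k−1}} for i_1 ≤ i_2 ≤ ⋯ ≤ i_k, is a squarefree stable operator. -/

import Mathlib

/-!
# The map `α^a` is a squarefree stable operator

The Betti numbers are computed through linear quotients. Suppose that the generators of a monomial
ideal can be ordered, with nondecreasing degrees, so that for each generator `U u` the colon ideal
of the earlier generators by `U u` is generated by a set `A u` of variables. Adding `U u` to the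
earlier generators enlarges the upper Koszul complex in multidegree `b = U u + c` by an interval of
faces `[supp c ∩ A u, supp c]`, or by nothing. A nondegenerate interval does not change the reduced
homology (`redH_interval`), since its faces can be matched by adding and removing a fixed vertex.
If the interval is the single face `T = supp c`, it creates one new homology class
(`redH_single`), because for degree reasons the homology that its boundary could kill vanishes.
Hence `β_{i, i + j}` is the sum of `binom (#A u) i` over the generators of degree `j`
(`betti_of_linQuot`).

For a squarefree strongly stable ideal `I` the minimal generators are the squarefree monomials
`x_{i₁}⋯x_{i_k}` of `I` with no proper initial segment `x_{i₁}⋯x_{i_e}` in `I`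
(`mem_GSet_iff`). Order them by degree and then by the sum of their indices. For every
nondecreasing `a`, the images of the generators under `α^a` have linear quotients in this order
(`linQuot_alphaL`), the variables of the colon ideal at the image of `x_{i₁}⋯x_{i_k}` being those
with index in one of the gaps `[i_{l-1} + 1 + a_{l-1}, i_l + a_{l-1})` for `l = 1, …, k`, where the
first gap starts at `a_0`. These gaps are disjoint and their sizes do not depend on `a`
(`card_gapSet`), so `α^a(I)` has the same Betti numbers as the ideal for `a = 0`, which is `I`.

Inclusions are preserved because a monomial of `J ⊆ I` has an initial segment that is a generator
of `I`, and `α^a` commutes with taking initial segments.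
-/

open scoped Classical
noncomputable section
namespace SqueezedSpheres

/-! ### Monomials of `K[x₁,x₂,…]` as finitely supported exponent vectors (index 0 unused). -/

/-- A monomial of the polynomial ring `S_[∞] = K[x₁,x₂,…]`, recorded by its exponent vector. -/
abbrev Mon : Type := ℕ →₀ ℕ

/-- The total degree of a monomial. -/
def degMon (u : Mon) : ℕ := u.sum fun _ e => e

/-- `m(u) = max{i : xᵢ divides u}` (with value `0` for `u = 1`). -/
def mVar (u : Mon) : ℕ := u.support.sup id

/-- The weakly increasing list `i₁ ≤ i₂ ≤ ⋯ ≤ i_d` of indices with `u = x_{i₁}⋯x_{i_d}`. -/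
def sortedIdx (u : Mon) : List ℕ := (Finsupp.toMultiset u).sort (· ≤ ·)

/-- `u ≼ v`: both have the same degree and, writing `u = x_{i₁}⋯x_{i_d}`,
`v = x_{j₁}⋯x_{j_d}` with weakly increasing indices, `i_k ≤ j_k` for all `k`. -/
def prec (u v : Mon) : Prop := List.Forall₂ (· ≤ ·) (sortedIdx u) (sortedIdx v)

/-- The squarefree monomial `x_S = ∏_{i ∈ S} x_i`. -/
def sqf (S : Finset ℕ) : Mon := Multiset.toFinsupp (S.val)

/-- `u` is a squarefree monomial. -/
def sqfreeMon (u : Mon) : Prop := ∀ j, u j ≤ 1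

/-- The lexicographic order: `u <_lex v` iff the leftmost index where the exponent
vectors differ has a larger exponent in `v`. -/
def lexLT (u v : Mon) : Prop := ∃ r, u r < v r ∧ ∀ t, t < r → u t = v t

/-- The degree reverse lexicographic order induced by `x₁ > x₂ > ⋯`:
`u <_drl v` iff `deg u < deg v`, or the degrees agree and at the largest index
where the exponent vectors differ `u` has the larger exponent. -/
def degrevlexLT (u v : Mon) : Prop :=
  degMon u < degMon v ∨ (degMon u = degMon v ∧ ∃ r, v r < u r ∧ ∀ t, r < t → u t = v t)

/-- The map `α^a` for a sequence `a : ℕ → ℕ` (with `a 0 = 0` in applications):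
`α^a(x_{i₁}x_{i₂}⋯x_{i_k}) = x_{i₁} x_{i₂+a₁} x_{i₃+a₂} ⋯ x_{i_k+a_{k-1}}`
for `i₁ ≤ i₂ ≤ ⋯ ≤ i_k`. -/
def alphaMap (a : ℕ → ℕ) (u : Mon) : Mon :=
  Multiset.toFinsupp (↑((sortedIdx u).mapIdx fun j i => i + a j))

variable (K : Type) [Field K]

/-! ### Monomial ideals of `S_[∞]`. -/

/-- The monomial `x^u` as a polynomial. -/
def mono (u : Mon) : MvPolynomial ℕ K := MvPolynomial.monomial u 1

/-- The monomial `x^u` belongs to the ideal `I`. -/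
def memMon (I : Ideal (MvPolynomial ℕ K)) (u : Mon) : Prop := mono K u ∈ I

/-- The (finitely generated) monomial ideal generated by a finite set of monomials. -/
def monSpan (G : Finset Mon) : Ideal (MvPolynomial ℕ K) :=
  Ideal.span ((fun u => mono K u) '' (↑G : Set Mon))

/-- `G(I)`: the minimal monomial generators of a monomial ideal `I`. -/
def GSet (I : Ideal (MvPolynomial ℕ K)) : Set Mon :=
  {u | memMon K I u ∧ ∀ i ∈ u.support, ¬ memMon K I (u - Finsupp.single i 1)}

/-- `max(I) = max{m(u) : u ∈ G(I)}`. -/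
def maxIdx (I : Ideal (MvPolynomial ℕ K)) : ℕ := sSup (mVar '' GSet K I)

/-- For `σ : M_[∞] → M_[∞]`, the ideal `σ(I)` generated by `{σ(u) : u ∈ G(I)}`. -/
def sigmaIdeal (σ : Mon → Mon) (I : Ideal (MvPolynomial ℕ K)) : Ideal (MvPolynomial ℕ K) :=
  Ideal.span ((fun u => mono K (σ u)) '' GSet K I)

/-- `I` is a finitely generated strongly stable (monomial) ideal of `S_[∞]`:
it is generated by finitely many monomials and is closed under the moves
`v ∈ I`, `u ≼ v` ⟹ `u ∈ I`. -/
def IsFGStronglyStable (I : Ideal (MvPolynomial ℕ K)) : Prop :=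
  (∃ G : Finset Mon, I = monSpan K G) ∧
    ∀ u v : Mon, memMon K I v → prec u v → memMon K I u

/-- `I` is a finitely generated squarefree strongly stable ideal of `S_[∞]`. -/
def IsFGSqfStronglyStable (I : Ideal (MvPolynomial ℕ K)) : Prop :=
  (∃ G : Finset Mon, (∀ u ∈ G, sqfreeMon u) ∧ I = monSpan K G) ∧
    ∀ u v : Mon, sqfreeMon u → sqfreeMon v → memMon K I v → prec u v → memMon K I u

/-! ### Simplicial homology over `K` of a finite simplicial complex,
used to define graded Betti numbers of monomial ideals (via upper Koszul
simplicial complexes, i.e. Hochster-type formulas) and the Cohen-Macaulay and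
Gorenstein* properties (via Reisner-type criteria). -/

/-- Boundary map coefficient: the coefficient of the face `T` in `∂S`. -/
def bCoeff (S T : Finset ℕ) : K :=
  if T ⊆ S ∧ S.card = T.card + 1 then
    (-1 : K) ^ (S.filter fun y => y < (S \ T).sum id).card
  else 0

/-- The simplicial boundary map from `i+1`-element faces to `i`-element faces. -/
def bdry (Δ : Finset (Finset ℕ)) (i : ℕ) :
    ((↥(Δ.filter fun S => S.card = i + 1) → K)) →ₗ[K]
      (↥(Δ.filter fun S => S.card = i) → K) :=
  Matrix.mulVecLin
    (Matrix.of fun (T : ↥(Δ.filter fun S => S.card = i))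
        (S : ↥(Δ.filter fun S => S.card = i + 1)) =>
      bCoeff K (↑S : Finset ℕ) (↑T : Finset ℕ))

/-- `redH K Δ i` is the dimension over `K` of the reduced simplicial homology
`H̃_{i-1}(Δ; K)`, computed at chain position `i` (faces of cardinality `i`);
in particular `redH K Δ 0 = dim H̃_{-1}`. -/
def redH (Δ : Finset (Finset ℕ)) : ℕ → ℕ
  | 0 => Module.finrank K (↥(Δ.filter fun S => S.card = 0) → K) -
      Module.finrank K ↥(LinearMap.range (bdry K Δ 0))
  | (i + 1) => Module.finrank K ↥(LinearMap.ker (bdry K Δ i)) -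
      Module.finrank K ↥(LinearMap.range (bdry K Δ (i + 1)))

/-- Membership of `x^b` in the monomial ideal generated by `G`. -/
def memGen (G : Finset Mon) (b : Mon) : Prop := ∃ g ∈ G, g ≤ b

/-- The upper Koszul simplicial complex `K^a(I)` of the monomial ideal generated
by `G` in multidegree `a`. -/
def koszulCx (G : Finset Mon) (a : Mon) : Finset (Finset ℕ) :=
  a.support.powerset.filter fun S => memGen G (a - sqf S)

/-- The graded Betti number `β_{i,j}` of the monomial ideal generated by `G`,
via Hochster's formula `β_{i,a}(I) = dim_K H̃_{i-1}(K^a(I); K)` summed over all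
multidegrees `a` of total degree `j`. -/
def bettiGens (G : Finset Mon) (i j : ℕ) : ℕ :=
  ∑ a ∈ (Finset.Iic (G.sum id)).filter fun a => degMon a = j,
    redH K (koszulCx G a) i

/-- The graded Betti numbers `β_{ij}(I) = dim_K Tor_i(I, K)_j` of a finitely
generated monomial ideal `I` (of value `0` on ideals that are not finitely
generated monomial ideals). -/
def betti (I : Ideal (MvPolynomial ℕ K)) (i j : ℕ) : ℕ :=
  if h : ∃ G : Finset Mon, I = monSpan K G then bettiGens K h.choose i j else 0

/-- The graded Betti numbers `β_{ij}(R/I)` of the quotient by a finitely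
generated monomial ideal. -/
def bettiQ (I : Ideal (MvPolynomial ℕ K)) (i j : ℕ) : ℕ :=
  if i = 0 then (if j = 0 then 1 else 0) else betti K I (i - 1) j

/-- `β_{ij}(R/I)` allowing integer indices (`0` for negative indices). -/
def bettiQZ (I : Ideal (MvPolynomial ℕ K)) (i j : ℤ) : ℕ :=
  if 0 ≤ i ∧ 0 ≤ j then bettiQ K I i.toNat j.toNat else 0

/-! ### Stable operators. -/

/-- A map `σ : M_[∞] → M_[∞]` is a stable operator if (i) it preserves all graded
Betti numbers of finitely generated strongly stable ideals and (ii) it preserves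
inclusions of finitely generated strongly stable ideals. -/
structure IsStableOperator (σ : Mon → Mon) : Prop where
  betti_eq : ∀ I : Ideal (MvPolynomial ℕ K), IsFGStronglyStable K I →
    ∀ i j, betti K I i j = betti K (sigmaIdeal K σ I) i j
  incl : ∀ J I : Ideal (MvPolynomial ℕ K), IsFGStronglyStable K J →
    IsFGStronglyStable K I → J ≤ I → sigmaIdeal K σ J ≤ sigmaIdeal K σ I

/-- A map `σ : M_[∞] → M_[∞]` is a squarefree stable operator if (i) it sends
finitely generated squarefree strongly stable ideals to squarefree monomial
ideals with the same graded Betti numbers and (ii) it preserves inclusions of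
finitely generated squarefree strongly stable ideals. -/
structure IsSqfStableOperator (σ : Mon → Mon) : Prop where
  sqfree : ∀ I : Ideal (MvPolynomial ℕ K), IsFGSqfStronglyStable K I →
    ∀ u ∈ GSet K I, sqfreeMon (σ u)
  betti_eq : ∀ I : Ideal (MvPolynomial ℕ K), IsFGSqfStronglyStable K I →
    ∀ i j, betti K I i j = betti K (sigmaIdeal K σ I) i j
  incl : ∀ J I : Ideal (MvPolynomial ℕ K), IsFGSqfStronglyStable K J →
    IsFGSqfStronglyStable K I → J ≤ I → sigmaIdeal K σ J ≤ sigmaIdeal K σ I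

/-! ### Generic initial ideals with respect to the degree reverse
lexicographic order. -/

/-- `u` is the initial (leading) monomial of the polynomial `f` w.r.t. degrevlex. -/
def IsLeadMon (f : MvPolynomial ℕ K) (u : Mon) : Prop :=
  u ∈ f.support ∧ ∀ v ∈ f.support, v ≠ u → degrevlexLT v u

/-- The initial ideal of `I` w.r.t. the degree reverse lexicographic order. -/
def inIdeal (I : Ideal (MvPolynomial ℕ K)) : Ideal (MvPolynomial ℕ K) :=
  Ideal.span {p | ∃ f ∈ I, ∃ u, IsLeadMon K f u ∧ p = mono K u}

/-- The action of a matrix `φ ∈ GL_n(K)` on polynomials,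
`x_j ↦ ∑_i φ_{ij} x_i` for `1 ≤ j ≤ n`. -/
def gAct (n : ℕ) (φ : Matrix (Fin n) (Fin n) K) :
    MvPolynomial ℕ K →ₐ[K] MvPolynomial ℕ K :=
  MvPolynomial.aeval fun j =>
    if h : 1 ≤ j ∧ j ≤ n then
      ∑ i : Fin n, MvPolynomial.C (φ i ⟨j - 1, by omega⟩) * MvPolynomial.X ((i : ℕ) + 1)
    else MvPolynomial.X j

/-- Evaluation of a polynomial in the `n × n` matrix entries at a matrix. -/
def evalMat (n : ℕ) (φ : Matrix (Fin n) (Fin n) K)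
    (P : MvPolynomial (Fin n × Fin n) K) : K :=
  MvPolynomial.eval (fun p => φ p.1 p.2) P

/-- `J` is the generic initial ideal of `I` (w.r.t. degrevlex and the action of
`GL_n(K)` on `x₁,…,x_n`): there is a nonempty Zariski open subset of `GL_n(K)`
on which `in(φ(I))` is constantly equal to `J`. -/
def GinSpec (n : ℕ) (I J : Ideal (MvPolynomial ℕ K)) : Prop :=
  ∃ P : MvPolynomial (Fin n × Fin n) K, P ≠ 0 ∧
    (∃ φ : Matrix (Fin n) (Fin n) K, IsUnit φ.det ∧ evalMat K n φ P ≠ 0) ∧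
    ∀ φ : Matrix (Fin n) (Fin n) K, IsUnit φ.det → evalMat K n φ P ≠ 0 →
      inIdeal K (Ideal.map (gAct K n φ) I) = J

/-- The generic initial ideal `gin(I)` w.r.t. the degree reverse lexicographic
order (and coordinate changes of `x₁,…,x_n`). -/
def gin (n : ℕ) (I : Ideal (MvPolynomial ℕ K)) : Ideal (MvPolynomial ℕ K) :=
  if h : ∃ J, GinSpec K n I J then h.choose else ⊥

/-- `gin(I)` for a finitely generated ideal of `S_[∞]`, computed in
`S_[max(I)]` as in the convention `gin(I) = gin(I ∩ S_[max(I)]) S_[∞]`. -/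
def ginInf (I : Ideal (MvPolynomial ℕ K)) : Ideal (MvPolynomial ℕ K) :=
  gin K (maxIdx K I) I

/-! ### Simplicial complexes on `[n]`, Stanley-Reisner ideals, `f`-, `h`- and
`g`-vectors, Cohen-Macaulay and Gorenstein* complexes. -/

/-- `Γ` is a simplicial complex on the vertex set `[n] = {1,…,n}`. -/
def IsComplexOn (n : ℕ) (Γ : Finset (Finset ℕ)) : Prop :=
  (∀ S ∈ Γ, S ⊆ Finset.Icc 1 n) ∧ (∀ S ∈ Γ, ∀ T ⊆ S, T ∈ Γ) ∧
    (∀ i ∈ Finset.Icc 1 n, ({i} : Finset ℕ) ∈ Γ)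

/-- `Γ` is `(d-1)`-dimensional (all faces have at most `d` vertices, some face
has exactly `d` vertices). -/
def IsDimensional (Γ : Finset (Finset ℕ)) (d : ℕ) : Prop :=
  (∀ S ∈ Γ, S.card ≤ d) ∧ ∃ S ∈ Γ, S.card = d

/-- The Stanley-Reisner ideal `I_Γ ⊂ S_[n]` of a simplicial complex on `[n]`. -/
def SRideal (n : ℕ) (Γ : Finset (Finset ℕ)) : Ideal (MvPolynomial ℕ K) :=
  Ideal.span {p | ∃ S : Finset ℕ, S ⊆ Finset.Icc 1 n ∧ S ∉ Γ ∧ p = mono K (sqf S)}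

/-- `fvec Γ i = f_{i-1}(Γ)`, the number of faces of `Γ` with `i` vertices. -/
def fvec (Γ : Finset (Finset ℕ)) (i : ℕ) : ℕ := (Γ.filter fun S => S.card = i).card

/-- The `h`-vector of a `(d-1)`-dimensional complex:
`h_i = ∑_{j=0}^{i} (-1)^{i-j} C(d-j, d-i) f_{j-1}`. -/
def hvec (Γ : Finset (Finset ℕ)) (d i : ℕ) : ℤ :=
  ∑ j ∈ Finset.range (i + 1),
    (-1 : ℤ) ^ (i - j) * (Nat.choose (d - j) (d - i) : ℤ) * (fvec Γ j : ℤ)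

/-- The `g`-vector: `g₀ = 1` and `g_i = h_i - h_{i-1}`. -/
def gvec (Γ : Finset (Finset ℕ)) (d i : ℕ) : ℤ :=
  if i = 0 then 1 else hvec Γ d i - hvec Γ d (i - 1)

/-- The link of a face `S` in `Γ`. -/
def linkOf (Γ : Finset (Finset ℕ)) (S : Finset ℕ) : Finset (Finset ℕ) :=
  Γ.filter fun T => Disjoint S T ∧ S ∪ T ∈ Γ

/-- `Γ` is Cohen-Macaulay over `K` (Reisner's criterion: for every face `S` and
every `i` below the dimension of the link of `S`, `H̃_{i-1}(link S; K) = 0`). -/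
def IsCM (Γ : Finset (Finset ℕ)) : Prop :=
  ∀ S ∈ Γ, ∀ i < (linkOf Γ S).sup Finset.card, redH K (linkOf Γ S) i = 0

/-- `Γ` is a `(d-1)`-dimensional Gorenstein* complex over `K` (the standard
characterization: every link has the reduced homology of a sphere of the
appropriate dimension). -/
def IsGorensteinStar (d : ℕ) (Γ : Finset (Finset ℕ)) : Prop :=
  IsDimensional Γ d ∧
    ∀ S ∈ Γ, ∀ i, redH K (linkOf Γ S) i = if i = d - S.card then 1 else 0

/-! ### The monomial sets `L(Γ)` and `U(Γ)`. -/

/-- `L_i(Γ)`: degree-`i` monomials of `S_[n-d]` not belonging to `gin(I_Γ)`. -/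
def Lset (n d : ℕ) (Γ : Finset (Finset ℕ)) (i : ℕ) : Set Mon :=
  {u | (∀ j ∈ u.support, 1 ≤ j ∧ j ≤ n - d) ∧ degMon u = i ∧
    ¬ memMon K (gin K n (SRideal K n Γ)) u}

/-- `L(Γ)`: monomials of `S_[n-d]` not belonging to `gin(I_Γ)`. -/
def LsetAll (n d : ℕ) (Γ : Finset (Finset ℕ)) : Set Mon :=
  {u | (∀ j ∈ u.support, 1 ≤ j ∧ j ≤ n - d) ∧ ¬ memMon K (gin K n (SRideal K n Γ)) u}

/-- `U(Γ)`: monomials of `S_[n-d-1]` not belonging to `gin(I_Γ)`. -/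
def Uset (n d : ℕ) (Γ : Finset (Finset ℕ)) : Set Mon :=
  {u | (∀ j ∈ u.support, 1 ≤ j ∧ j ≤ n - d - 1) ∧
    ¬ memMon K (gin K n (SRideal K n Γ)) u}

/-- `U_i(Γ)`: degree-`i` monomials of `S_[n-d-1]` not belonging to `gin(I_Γ)`. -/
def UsetDeg (n d : ℕ) (Γ : Finset (Finset ℕ)) (i : ℕ) : Set Mon :=
  {u ∈ Uset K n d Γ | degMon u = i}

/-! ### Lefschetz properties. -/

/-- The ideal generated by the variables outside `{x₁,…,x_n}`. -/
def outsideIdeal (n : ℕ) : Ideal (MvPolynomial ℕ K) :=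
  Ideal.span {p | ∃ j : ℕ, (j = 0 ∨ n < j) ∧ p = MvPolynomial.X j}

/-- A linear form in the variables `x₁,…,x_n`. -/
def IsLinForm (n : ℕ) (f : MvPolynomial ℕ K) : Prop :=
  f ∈ MvPolynomial.homogeneousSubmodule ℕ K 1 ∧ f.vars ⊆ Finset.Icc 1 n

/-- The `i`-th homogeneous component of the quotient by `J`, as a `K`-submodule. -/
def grPiece (J : Ideal (MvPolynomial ℕ K)) (i : ℕ) :
    Submodule K (MvPolynomial ℕ K ⧸ J) :=
  Submodule.map (Ideal.Quotient.mkₐ K J).toLinearMap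
    (MvPolynomial.homogeneousSubmodule ℕ K i)

/-- The ideal `I_Γ + (θ₁,…,θ_d)` inside `S_[n]`, realized in `S_[∞]` by also
killing the variables outside `{x₁,…,x_n}`. -/
def fullIdeal (n d : ℕ) (Γ : Finset (Finset ℕ)) (θ : Fin d → MvPolynomial ℕ K) :
    Ideal (MvPolynomial ℕ K) :=
  SRideal K n Γ ⊔ Ideal.span (Set.range θ) ⊔ outsideIdeal K n

/-- `θ₁,…,θ_d` is a system of parameters of `S_[n]/I_Γ` consisting of linear
forms (for a `(d-1)`-dimensional complex: the quotient by them is Artinian,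
i.e. a finite dimensional `K`-vector space). -/
def IsLinearSOP (n d : ℕ) (Γ : Finset (Finset ℕ)) (θ : Fin d → MvPolynomial ℕ K) : Prop :=
  (∀ k, IsLinForm K n (θ k)) ∧ Module.Finite K (MvPolynomial ℕ K ⧸ fullIdeal K n d Γ θ)

/-- Multiplication by (the class of) `f` is injective from the `i`-th to the
`i'`-th homogeneous component of the quotient by `J`. -/
def mulInjOn (J : Ideal (MvPolynomial ℕ K)) (f : MvPolynomial ℕ K) (i i' : ℕ) : Prop :=
  ∀ a b : MvPolynomial ℕ K ⧸ J, a ∈ grPiece K J i → b ∈ grPiece K J i →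
    Ideal.Quotient.mk J f * a = Ideal.Quotient.mk J f * b → a = b

/-- Multiplication by (the class of) `f` maps the `i`-th homogeneous component
of the quotient by `J` onto the `i'`-th one. -/
def mulSurjOnto (J : Ideal (MvPolynomial ℕ K)) (f : MvPolynomial ℕ K) (i i' : ℕ) : Prop :=
  ∀ c ∈ grPiece K J i', ∃ a ∈ grPiece K J i, Ideal.Quotient.mk J f * a = c

/-- The weak Lefschetz property of a `(d-1)`-dimensional (Gorenstein*)
complex `Γ` on `[n]`. -/
def HasWLP (n d : ℕ) (Γ : Finset (Finset ℕ)) : Prop :=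
  ∃ (θ : Fin d → MvPolynomial ℕ K) (ω : MvPolynomial ℕ K),
    IsLinearSOP K n d Γ θ ∧ IsLinForm K n ω ∧
    (∀ i, 1 ≤ i → i ≤ d / 2 → mulInjOn K (fullIdeal K n d Γ θ) ω (i - 1) i) ∧
    (∀ i, d / 2 < i → mulSurjOnto K (fullIdeal K n d Γ θ) ω (i - 1) i)

/-- The strong Lefschetz property of a `(d-1)`-dimensional (Gorenstein*)
complex `Γ` on `[n]`. -/
def HasSLP (n d : ℕ) (Γ : Finset (Finset ℕ)) : Prop :=
  ∃ (θ : Fin d → MvPolynomial ℕ K) (ω : MvPolynomial ℕ K),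
    IsLinearSOP K n d Γ θ ∧ IsLinForm K n ω ∧
    ∀ i ≤ d / 2,
      mulInjOn K (fullIdeal K n d Γ θ) (ω ^ (d - 2 * i)) i (d - i) ∧
      mulSurjOnto K (fullIdeal K n d Γ θ) (ω ^ (d - 2 * i)) i (d - i)

/-! ### Shifted order ideals of monomials, squeezed balls and squeezed spheres. -/

/-- `U` is a shifted order ideal of monomials of `S_[m]`:
it contains `1, x₁,…,x_m`, consists of monomials in `x₁,…,x_m`, is closed
under taking divisors, and is closed under `u ∈ U`, `u ≼ v` ⟹ `v ∈ U`. -/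
def IsShiftedOrderIdeal (m : ℕ) (U : Finset Mon) : Prop :=
  ((0 : Mon) ∈ U) ∧ (∀ i, 1 ≤ i → i ≤ m → (Finsupp.single i 1 : Mon) ∈ U) ∧
  (∀ u ∈ U, ∀ j ∈ (u : Mon).support, 1 ≤ j ∧ j ≤ m) ∧
  (∀ u ∈ U, ∀ v : Mon, v ≤ u → v ∈ U) ∧
  (∀ u ∈ U, ∀ v : Mon, prec u v → (∀ j ∈ v.support, 1 ≤ j ∧ j ≤ m) → v ∈ U)

/-- `I(U) ⊂ S_[∞]`: the ideal generated by all monomials of `S_[m]` not in `U`. -/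
def IU (m : ℕ) (U : Finset Mon) : Ideal (MvPolynomial ℕ K) :=
  Ideal.span {p | ∃ u : Mon, (∀ j ∈ u.support, 1 ≤ j ∧ j ≤ m) ∧ u ∉ U ∧ p = mono K u}

/-- The facet `F_d(u) ⊂ [n]` associated with a monomial `u = x_{i₁}⋯x_{i_k}`,
`i₁ ≤ ⋯ ≤ i_k`:
`F_d(u) = {i₁, i₁+1} ∪ {i₂+2, i₂+3} ∪ ⋯ ∪ {i_k+2(k-1), i_k+2k-1} ∪ {n+2k-d,…,n}`. -/
def Fface (n d : ℕ) (u : Mon) : Finset ℕ :=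
  ((Finset.range (degMon u)).biUnion fun j =>
      {(sortedIdx u).getD j 0 + 2 * j, (sortedIdx u).getD j 0 + 2 * j + 1}) ∪
    Finset.Icc (n + 2 * degMon u - d) n

/-- The squeezed `d`-ball `B_d(U)`: the simplicial complex on `[n]` generated by
`{F_d(u) : u ∈ U}`. -/
def squeezedBall (n d : ℕ) (U : Finset Mon) : Finset (Finset ℕ) :=
  U.biUnion fun u => (Fface n d u).powerset

/-- The squeezed `(d-1)`-sphere `S_d(U) = ∂B_d(U)`: the subcomplex of `B_d(U)`
generated by the `d`-element faces lying in exactly one facet. -/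
def squeezedSphere (n d : ℕ) (U : Finset Mon) : Finset (Finset ℕ) :=
  ((squeezedBall n d U).filter fun G => G.card = d ∧
      ((U.image fun u => Fface n d u).filter fun F => G ⊆ F).card = 1).biUnion
    Finset.powerset

end SqueezedSpheres

/-! ### Linear quotients auxiliary data. -/

namespace SqueezedSpheres
open scoped Classical
noncomputable section

/-- For `u = x_{i₁}⋯x_{i_d}` with `i₁ ≤ ⋯ ≤ i_d`: `iIdx u l = i_l`, with the
convention `i₀ = 1`. -/
def iIdx (u : Mon) (l : ℕ) : ℕ := if l = 0 then 1 else (sortedIdx u).getD (l - 1) 0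

/-- The set `⋃_{l=0}^{d-1} {k : i_l + a_l ≤ k < i_{l+1} + a_l}` (where `i₀ = 1`
and `a₀ = 0`). -/
def ASet (a : ℕ → ℕ) (u : Mon) : Set ℕ :=
  {k | ∃ l < degMon u, iIdx u l + a l ≤ k ∧ k < iIdx u (l + 1) + a l}

/-! ### Polytopal spheres. -/

/-- `S` is the vertex set of a proper (exposed) face of the polytope with
vertices `v i`, `i ∈ [n]`. -/
def IsProperFaceSet (n d : ℕ) (v : ℕ → (Fin d → ℝ)) (S : Finset ℕ) : Prop :=
  ∃ (ℓ : (Fin d → ℝ) →ₗ[ℝ] ℝ) (c : ℝ),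
    (∀ i ∈ Finset.Icc 1 n, ℓ (v i) ≤ c) ∧
    (∀ i ∈ Finset.Icc 1 n, (ℓ (v i) = c ↔ i ∈ S)) ∧
    (∃ i ∈ Finset.Icc 1 n, ℓ (v i) < c)

/-- `Γ` is (isomorphic to) the boundary complex of a simplicial `d`-polytope
with `n` vertices: there is an injective placement `v` of the vertices `[n]` in
`ℝ^d` spanning affinely, each `v i` a vertex (extreme point) of the convex hull,
every proper face a simplex, such that the nonempty faces of `Γ` are exactly
the vertex sets of proper faces of the polytope. -/
def IsPolytopalSphere (n d : ℕ) (Γ : Finset (Finset ℕ)) : Prop :=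
  ∃ v : ℕ → (Fin d → ℝ),
    Set.InjOn v ↑(Finset.Icc 1 n) ∧
    affineSpan ℝ (v '' ↑(Finset.Icc 1 n)) = ⊤ ∧
    (∀ i ∈ Finset.Icc 1 n, v i ∉ convexHull ℝ (v '' ↑((Finset.Icc 1 n).erase i))) ∧
    (∀ S : Finset ℕ, S ⊆ Finset.Icc 1 n → IsProperFaceSet n d v S →
      AffineIndependent ℝ fun i : ↥S => v ↑i) ∧
    (∀ S : Finset ℕ, S.Nonempty →
      (S ∈ Γ ↔ S ⊆ Finset.Icc 1 n ∧ IsProperFaceSet n d v S)) ∧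
    (∅ : Finset ℕ) ∈ Γ

/-! ### Exterior algebraic shifting.

For a generic matrix `g ∈ GL_n(K)` the image of the exterior monomial `e_S` in
the exterior face ring `E/J_Γ` has, in the basis `{e_T : T ∈ Γ}`, coordinates
`± det g[T,S]`; `S` is a face of the exterior algebraic shifted complex
`Δ^e(Γ)` (defined by `J_{Δ^e(Γ)} = Gin(J_Γ)` w.r.t. degrevlex) if and only if
this image does not lie in the span of the images of the `e_T` with
`T <_drl S`. -/

variable (K : Type) [Field K]

/-- Matrix entry `g_{st}` for `1`-based indices `s, t ∈ [n]`. -/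
def gEnt (n : ℕ) (g : Matrix (Fin n) (Fin n) K) (s t : ℕ) : K :=
  if hs : s - 1 < n then if ht : t - 1 < n then g ⟨s - 1, hs⟩ ⟨t - 1, ht⟩ else 0 else 0

/-- The minor `det g[T, S]` of rows `T` and columns `S` (two subsets of `[n]` of
equal cardinality, taken in increasing order). -/
def subDet (n : ℕ) (g : Matrix (Fin n) (Fin n) K) (T S : Finset ℕ) : K :=
  if h : T.card = S.card then
    Matrix.det (Matrix.of fun a b : Fin S.card =>
      gEnt K n g (T.orderEmbOfFin h a) (S.orderEmbOfFin rfl b))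
  else 0

/-- The coordinate vector (in the basis of faces of `Γ`) of the image of the
generic exterior monomial `e_S` in the exterior face ring of `Γ`. -/
def lamVec (n : ℕ) (Γ : Finset (Finset ℕ)) (g : Matrix (Fin n) (Fin n) K)
    (S : Finset ℕ) : Finset ℕ → K :=
  fun T => if T ∈ Γ ∧ T.card = S.card then subDet K n g T S else 0

/-- Degrevlex on squarefree monomials: `S <_drl T` (for `|S| = |T|`) iff the
largest element of the symmetric difference belongs to `S`. -/
def drlSetLT (S T : Finset ℕ) : Prop :=
  ∃ r ∈ S, r ∉ T ∧ ∀ t, r < t → (t ∈ S ↔ t ∈ T)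

/-- `Δ` is the exterior algebraic shifted complex `Δ^e(Γ)` (i.e.
`J_Δ = Gin(J_Γ)`, the generic initial ideal of the exterior face ideal of `Γ`
w.r.t. degrevlex): for every matrix `g` in a nonempty Zariski open subset of
`GL_n(K)`, a subset `S ⊆ [n]` is a face of `Δ` iff the image of the generic
exterior monomial `e_S` in the exterior face ring of `Γ` does not lie in the
span of the images of the `e_T` with `T <_drl S`. -/
def DeltaESpec (n : ℕ) (Γ Δ : Finset (Finset ℕ)) : Prop :=
  ∃ P : MvPolynomial (Fin n × Fin n) K, P ≠ 0 ∧
    (∃ g : Matrix (Fin n) (Fin n) K, IsUnit g.det ∧ evalMat K n g P ≠ 0) ∧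
    ∀ g : Matrix (Fin n) (Fin n) K, IsUnit g.det → evalMat K n g P ≠ 0 →
      ∀ S : Finset ℕ, S ∈ Δ ↔ S ⊆ Finset.Icc 1 n ∧
        lamVec K n Γ g S ∉ Submodule.span K
          {w | ∃ T : Finset ℕ, T ⊆ Finset.Icc 1 n ∧ T.card = S.card ∧
            drlSetLT T S ∧ w = lamVec K n Γ g T}

/-- The exterior algebraic shifted complex `Δ^e(Γ)` of a complex on `[n]`. -/
def deltaE (n : ℕ) (Γ : Finset (Finset ℕ)) : Finset (Finset ℕ) :=
  if h : ∃ Δ, DeltaESpec K n Γ Δ then h.choose else ∅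

/-- The complex `σ(Γ)` on `[n]` defined by `I_{σ(Γ)} = σ(I_Γ S_[∞]) ∩ S_[n]`. -/
def sigmaCplx (n : ℕ) (σ : Mon → Mon) (Γ : Finset (Finset ℕ)) : Finset (Finset ℕ) :=
  (Finset.Icc 1 n).powerset.filter fun S =>
    ¬ memMon K (sigmaIdeal K σ (SRideal K n Γ)) (sqf S)

/-! ### Squeezing. -/

/-- `U(Γ)` as a finite set of monomials. -/
def UFin (n d : ℕ) (Γ : Finset (Finset ℕ)) : Finset Mon :=
  if h : (Uset K n d Γ).Finite then h.toFinset else ∅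

/-- The squeezing operation `Sq(Γ) = S_d(U(Γ))`. -/
def SqCplx (n d : ℕ) (Γ : Finset (Finset ℕ)) : Finset (Finset ℕ) :=
  squeezedSphere n d (UFin K n d Γ)

/-- The face `{i₁, i₂+1, …, i_k+k-1} ∪ {n-k+1,…,n}` associated with a monomial
`u = x_{i₁}⋯x_{i_k}`, `i₁ ≤ ⋯ ≤ i_k`. -/
def Lface (n : ℕ) (u : Mon) : Finset ℕ :=
  ((Finset.range (degMon u)).image fun j => (sortedIdx u).getD j 0 + j) ∪
    Finset.Icc (n - degMon u + 1) n

end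
end SqueezedSpheres

namespace SqueezedSpheres

/-! ### Ranks of the simplicial boundary maps -/

section Chains
variable (K : Type) [Field K]

/-- The sign `(-1)^{#{y ∈ S : y < x}}` of the facet `S \ {x}` in the boundary of `S`. -/
def sgn (S : Finset ℕ) (x : ℕ) : K := (-1 : K) ^ (S.filter fun y => y < x).card

/-- The boundary of the oriented simplex `S`, as a vector in the space with basis all
finite subsets of `ℕ`. -/
def bdS (S : Finset ℕ) : Finset ℕ →₀ K := ∑ x ∈ S, Finsupp.single (S.erase x) (sgn K S x)

/-- The simplicial boundary operator on the space with basis all finite subsets of `ℕ`. -/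
def bd : (Finset ℕ →₀ K) →ₗ[K] (Finset ℕ →₀ K) := Finsupp.linearCombination K (bdS K)

/-- The space of boundaries of `Δ` spanned by faces with `i` elements. -/
def bSpace (Δ : Finset (Finset ℕ)) (i : ℕ) : Submodule K (Finset ℕ →₀ K) :=
  Submodule.span K (bdS K '' ↑(Δ.filter fun S => S.card = i + 1))

/-- `Δ` is closed under taking subsets. -/
def IsCx (Δ : Finset (Finset ℕ)) : Prop := ∀ S ∈ Δ, ∀ T ⊆ S, T ∈ Δ

instance (Δ : Finset (Finset ℕ)) (i : ℕ) : FiniteDimensional K (bSpace K Δ i) :=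
  FiniteDimensional.span_of_finite K ((Finset.finite_toSet _).image _)

lemma sgn_ne_zero (S : Finset ℕ) (x : ℕ) : sgn K S x ≠ 0 :=
  pow_ne_zero _ (by simp)

lemma bd_single (S : Finset ℕ) (c : K) : bd K (Finsupp.single S c) = c • bdS K S := by
  simp [bd]

lemma bdS_apply (S R : Finset ℕ) : bdS K S R = bCoeff K S R := by
  unfold bdS bCoeff
  rw [Finsupp.finsetSum_apply]
  simp only [Finsupp.single_apply]
  split_ifs with h
  · obtain ⟨h1, h2⟩ := h
    have hc : (S \ R).card = 1 := by
      rw [Finset.card_sdiff_of_subset h1]; omega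
    obtain ⟨x, hx⟩ := Finset.card_eq_one.1 hc
    have hxS : x ∈ S ∧ x ∉ R := by
      have : x ∈ S \ R := by rw [hx]; simp
      simpa using this
    have hR : S.erase x = R := by
      rw [Finset.erase_eq, ← hx]
      exact Finset.sdiff_sdiff_eq_self h1
    rw [Finset.sum_eq_single x]
    · simp [hR, hx, sgn]
    · intro y hy hyx
      rw [if_neg]
      intro h
      have : x ∈ S.erase y := Finset.mem_erase.2 ⟨hyx.symm, hxS.1⟩
      rw [h] at this
      exact hxS.2 this
    · intro h; exact absurd hxS.1 h
  · refine Finset.sum_eq_zero fun x hx => if_neg ?_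
    rintro rfl
    refine h ⟨Finset.erase_subset _ _, ?_⟩
    have := Finset.card_pos.2 ⟨x, hx⟩
    rw [Finset.card_erase_of_mem hx]
    omega

lemma sgn_erase_lt {S : Finset ℕ} {x y : ℕ} (hx : x ∈ S) (h : x < y) :
    sgn K S y = - sgn K (S.erase x) y := by
  have h1 : S.filter (fun z => z < y) = insert x ((S.erase x).filter fun z => z < y) := by
    ext z; simp only [Finset.mem_filter, Finset.mem_insert, Finset.mem_erase]
    constructor
    · rintro ⟨h1, h2⟩; by_cases hz : z = x <;> simp_all
    · rintro (rfl | h) <;> simp_all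
  unfold sgn
  rw [h1, Finset.card_insert_of_notMem (by simp), pow_succ]
  ring

lemma sgn_erase_gt {S : Finset ℕ} {x y : ℕ} (h : y < x) :
    sgn K S y = sgn K (S.erase x) y := by
  unfold sgn
  congr 2
  ext z; simp only [Finset.mem_filter, Finset.mem_erase]
  constructor
  · rintro ⟨h1, h2⟩; exact ⟨⟨by omega, h1⟩, h2⟩
  · rintro ⟨⟨h0, h1⟩, h2⟩; exact ⟨h1, h2⟩

lemma sgn_swap {S : Finset ℕ} {x y : ℕ} (hx : x ∈ S) (hy : y ∈ S) (h : x ≠ y) :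
    sgn K S x * sgn K (S.erase x) y + sgn K S y * sgn K (S.erase y) x = 0 := by
  rcases lt_or_gt_of_ne h with h | h
  · rw [sgn_erase_lt K hx h, ← sgn_erase_gt K (S := S) h]; ring
  · rw [sgn_erase_lt K hy h, ← sgn_erase_gt K (S := S) h]; ring

lemma bd_bdS (S : Finset ℕ) : bd K (bdS K S) = 0 := by
  have h : bd K (bdS K S) = ∑ p ∈ S.sigma fun x => S.erase x,
      Finsupp.single ((S.erase p.1).erase p.2) (sgn K S p.1 * sgn K (S.erase p.1) p.2) := by
    rw [Finset.sum_sigma, bdS, map_sum]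
    refine Finset.sum_congr rfl fun x _ => ?_
    rw [bd_single, bdS, Finset.smul_sum]
    simp
  rw [h]
  refine Finset.sum_involution (fun p _ => ⟨p.2, p.1⟩) ?_ ?_ ?_ ?_
  · rintro ⟨x, y⟩ hp
    simp only [Finset.mem_sigma, Finset.mem_erase] at hp
    rw [Finset.erase_right_comm, ← Finsupp.single_add,
      sgn_swap K hp.1 hp.2.2 (Ne.symm hp.2.1), Finsupp.single_zero]
  · rintro ⟨x, y⟩ hp _ h
    simp only [Finset.mem_sigma, Finset.mem_erase] at hp
    simp only [Sigma.mk.injEq] at h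
    exact hp.2.1 h.1
  · rintro ⟨x, y⟩ hp
    simp only [Finset.mem_sigma, Finset.mem_erase] at hp ⊢
    exact ⟨hp.2.2, Ne.symm hp.2.1, hp.1⟩
  · rintro ⟨x, y⟩ _
    rfl

/-- The space of `i`-chains of `Δ` embedded in the space of all chains. -/
def chainEmb (Δ : Finset (Finset ℕ)) (i : ℕ) :
    ((↥(Δ.filter fun S => S.card = i) → K)) →ₗ[K] (Finset ℕ →₀ K) :=
  Fintype.linearCombination K fun S => Finsupp.single (S : Finset ℕ) (1 : K)

lemma chainEmb_injective (Δ : Finset (Finset ℕ)) (i : ℕ) :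
    Function.Injective (chainEmb K Δ i) := by
  rw [injective_iff_map_eq_zero]
  intro f hf
  funext S
  have := DFunLike.congr_fun hf (S : Finset ℕ)
  simp only [chainEmb, Fintype.linearCombination_apply, Finsupp.finsetSum_apply,
    Finsupp.smul_apply, Finsupp.single_apply, Finsupp.zero_apply] at this
  rw [Finset.sum_eq_single S (fun T _ h => by simp [Subtype.coe_injective.ne h])
    (fun h => absurd (Finset.mem_univ _) h)] at this
  simpa using this

lemma chainEmb_bdry {Δ : Finset (Finset ℕ)} (hΔ : IsCx Δ) (i : ℕ) :
    chainEmb K Δ i ∘ₗ bdry K Δ i = bd K ∘ₗ chainEmb K Δ (i + 1) := by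
  refine LinearMap.pi_ext' fun S => LinearMap.ext_ring ?_
  simp only [LinearMap.comp_apply, LinearMap.single_apply, bdry, Matrix.mulVecLin_apply,
    Matrix.mulVec_single_one, chainEmb, Fintype.linearCombination_apply_single, one_smul]
  rw [bd_single, one_smul, Fintype.linearCombination_apply]
  ext R
  rw [bdS_apply, Finsupp.finsetSum_apply]
  simp only [Finsupp.smul_apply, Finsupp.single_apply, Matrix.col_apply, Matrix.of_apply,
    smul_eq_mul, mul_ite, mul_one, mul_zero]
  by_cases hR : R ∈ Δ.filter fun S => S.card = i
  · rw [Finset.sum_eq_single ⟨R, hR⟩]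
    · simp
    · intro T _ h
      rw [if_neg]
      intro h'
      exact h (Subtype.ext h')
    · intro h; exact absurd (Finset.mem_univ _) h
  · rw [Finset.sum_eq_zero]
    · unfold bCoeff
      rw [if_neg]
      rintro ⟨h1, h2⟩
      have hS := Finset.mem_filter.1 S.2
      exact hR (Finset.mem_filter.2 ⟨hΔ _ hS.1 _ h1, by omega⟩)
    · rintro T _
      rw [if_neg]
      rintro rfl
      exact hR T.2

lemma finrank_range_bdry {Δ : Finset (Finset ℕ)} (hΔ : IsCx Δ) (i : ℕ) :
    Module.finrank K ↥(LinearMap.range (bdry K Δ i)) = Module.finrank K (bSpace K Δ i) := by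
  rw [(Submodule.equivMapOfInjective _ (chainEmb_injective K Δ i) _).finrank_eq,
    ← LinearMap.range_comp, chainEmb_bdry K hΔ, LinearMap.range_comp, chainEmb,
    Fintype.range_linearCombination, Submodule.map_span]
  suffices h : bd K '' Set.range (fun S : ↥(Δ.filter fun S => S.card = i + 1) =>
      Finsupp.single (S : Finset ℕ) (1 : K)) = bdS K '' ↑(Δ.filter fun S => S.card = i + 1) by
    rw [h, bSpace]
  ext v
  simp only [Set.mem_image, Set.mem_range, Finset.mem_coe, Subtype.exists, exists_prop]
  constructor
  · rintro ⟨_, ⟨S, hS, rfl⟩, rfl⟩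
    exact ⟨S, hS, by rw [bd_single, one_smul]⟩
  · rintro ⟨S, hS, rfl⟩
    exact ⟨_, ⟨S, hS, rfl⟩, by rw [bd_single, one_smul]⟩

lemma bdry_comp_bdry {Δ : Finset (Finset ℕ)} (hΔ : IsCx Δ) (i : ℕ) :
    bdry K Δ i ∘ₗ bdry K Δ (i + 1) = 0 := by
  refine LinearMap.ext fun f => chainEmb_injective K Δ i ?_
  have h1 : ∀ g, chainEmb K Δ i (bdry K Δ i g) = bd K (chainEmb K Δ (i + 1) g) :=
    fun g => LinearMap.congr_fun (chainEmb_bdry K hΔ i) g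
  have h2 : ∀ g, chainEmb K Δ (i + 1) (bdry K Δ (i + 1) g) = bd K (chainEmb K Δ (i + 2) g) :=
    fun g => LinearMap.congr_fun (chainEmb_bdry K hΔ (i + 1)) g
  have h3 : bd K ∘ₗ bd K = 0 := by
    refine Finsupp.lhom_ext fun S c => ?_
    rw [LinearMap.comp_apply, bd_single, map_smul, bd_bdS]
    simp
  rw [LinearMap.comp_apply]
  rw [h1, h2, LinearMap.zero_apply, map_zero]
  exact LinearMap.congr_fun h3 _

lemma finrank_ker_bdry {Δ : Finset (Finset ℕ)} (hΔ : IsCx Δ) (i : ℕ) :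
    Module.finrank K (bSpace K Δ i) + Module.finrank K ↥(LinearMap.ker (bdry K Δ i)) =
      (Δ.filter fun S => S.card = i + 1).card := by
  rw [← finrank_range_bdry K hΔ, LinearMap.finrank_range_add_finrank_ker]
  simp

lemma finrank_bSpace_add_le {Δ : Finset (Finset ℕ)} (hΔ : IsCx Δ) (i : ℕ) :
    Module.finrank K (bSpace K Δ i) + Module.finrank K (bSpace K Δ (i + 1)) ≤
      (Δ.filter fun S => S.card = i + 1).card := by
  rw [← finrank_ker_bdry K hΔ i, ← finrank_range_bdry K hΔ (i + 1)]
  refine Nat.add_le_add_left (Submodule.finrank_mono ?_) _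
  exact LinearMap.range_le_ker_iff.2 (bdry_comp_bdry K hΔ i)

lemma finrank_bSpace_zero_le {Δ : Finset (Finset ℕ)} (hΔ : IsCx Δ) :
    Module.finrank K (bSpace K Δ 0) ≤ (Δ.filter fun S => S.card = 0).card := by
  rw [← finrank_range_bdry K hΔ 0]
  refine (Submodule.finrank_le _).trans ?_
  simp

lemma redH_zero_add {Δ : Finset (Finset ℕ)} (hΔ : IsCx Δ) :
    redH K Δ 0 + Module.finrank K (bSpace K Δ 0) = (Δ.filter fun S => S.card = 0).card := by
  have h := finrank_bSpace_zero_le K hΔ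
  rw [redH, finrank_range_bdry K hΔ]
  simp only [Module.finrank_fintype_fun_eq_card, Fintype.card_coe]
  omega

lemma redH_succ_add {Δ : Finset (Finset ℕ)} (hΔ : IsCx Δ) (i : ℕ) :
    redH K Δ (i + 1) + Module.finrank K (bSpace K Δ i) +
      Module.finrank K (bSpace K Δ (i + 1)) = (Δ.filter fun S => S.card = i + 1).card := by
  have h := finrank_bSpace_add_le K hΔ i
  have h2 := finrank_ker_bdry K hΔ i
  rw [redH, finrank_range_bdry K hΔ]
  omega

/-! ### Adding an interval of faces to a complex -/

/-- Vectors with a dual family of functionals that vanish on `p` are linearly independent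
modulo `p`. -/
lemma finrank_sup_span_image {V ι : Type*} [AddCommGroup V] [Module K V]
    (p : Submodule K V) [FiniteDimensional K p] (v : ι → V) (φ : ι → V →ₗ[K] K)
    (N : Finset ι) (hp : ∀ i ∈ N, ∀ x ∈ p, φ i x = 0)
    (hv : ∀ i ∈ N, φ i (v i) ≠ 0) (hvv : ∀ i ∈ N, ∀ j ∈ N, i ≠ j → φ i (v j) = 0) :
    Module.finrank K ↥(p ⊔ Submodule.span K (v '' ↑N)) = Module.finrank K p + N.card := by
  induction N using Finset.induction_on with
  | empty => rw [Finset.coe_empty, Set.image_empty, Submodule.span_empty, sup_bot_eq,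
      Finset.card_empty, add_zero]
  | insert i N hi ih =>
    have ih := ih (fun j hj => hp j (Finset.mem_insert_of_mem hj))
      (fun j hj => hv j (Finset.mem_insert_of_mem hj))
      (fun j hj k hk => hvv j (Finset.mem_insert_of_mem hj) k (Finset.mem_insert_of_mem hk))
    have : FiniteDimensional K (Submodule.span K (v '' ↑N)) :=
      FiniteDimensional.span_of_finite K ((Finset.finite_toSet _).image _)
    set q := p ⊔ Submodule.span K (v '' ↑N) with hq
    have hker : q ≤ LinearMap.ker (φ i) := by
      refine sup_le (fun x hx => hp i (Finset.mem_insert_self _ _) x hx) ?_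
      rw [Submodule.span_le]
      rintro _ ⟨j, hj, rfl⟩
      refine hvv i (Finset.mem_insert_self _ _) j (Finset.mem_insert_of_mem hj) ?_
      rintro rfl
      exact hi hj
    have hvi := hv i (Finset.mem_insert_self _ _)
    have hnot : v i ∉ q := fun h => hvi (hker h)
    have hinf : q ⊓ Submodule.span K {v i} = ⊥ := by
      rw [← disjoint_iff, Submodule.disjoint_span_singleton]
      exact fun h => absurd h hnot
    have hne : v i ≠ 0 := fun h => hvi (by rw [h, map_zero])
    have h := Submodule.finrank_sup_add_finrank_inf_eq q (Submodule.span K {v i})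
    rw [hinf, finrank_bot, finrank_span_singleton hne, ih] at h
    rw [Finset.coe_insert, Set.image_insert_eq, Submodule.span_insert, sup_left_comm, sup_comm,
      ← hq, Finset.card_insert_of_notMem hi]
    omega

/-- If the faces of `Δ'` outside `Δ` are the sets between `T` and `W`, then matching `F`
with `F ∪ {w}` for some `w ∈ W \ T` shows that each boundary rank goes up by the number of
new faces avoiding `w`. -/
lemma finrank_bSpace_interval {Δ Δ' : Finset (Finset ℕ)} (hΔ : IsCx Δ) (hΔ' : IsCx Δ')
    {T W : Finset ℕ}
    (h : ∀ F, F ∈ Δ' ↔ F ∈ Δ ∨ (T ⊆ F ∧ F ⊆ W)) (hd : ∀ F, T ⊆ F → F ⊆ W → F ∉ Δ)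
    {w : ℕ} (hwW : w ∈ W) (hwT : w ∉ T) (i : ℕ) :
    Module.finrank K (bSpace K Δ' i) = Module.finrank K (bSpace K Δ i) +
      ((Finset.Icc T (W.erase w)).filter fun F => F.card = i).card := by
  set N := (Finset.Icc T (W.erase w)).filter fun F => F.card = i with hN
  have memN : ∀ F, F ∈ N ↔ (T ⊆ F ∧ F ⊆ W ∧ w ∉ F) ∧ F.card = i := by
    intro F
    rw [hN, Finset.mem_filter, Finset.mem_Icc]
    simp only [Finset.subset_erase]
  have key : bSpace K Δ' i =
      bSpace K Δ i ⊔ Submodule.span K ((fun F => bdS K (insert w F)) '' ↑N) := by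
    apply le_antisymm
    · have hbase : ∀ S, S.card = i + 1 → (S ∈ Δ ∨ (T ⊆ S ∧ S ⊆ W ∧ w ∈ S)) →
          bdS K S ∈ bSpace K Δ i ⊔
            Submodule.span K ((fun F => bdS K (insert w F)) '' ↑N) := by
        rintro S hc (hS | ⟨h1, h2, h3⟩)
        · exact Submodule.mem_sup_left (Submodule.subset_span ⟨S, by simp [hS, hc], rfl⟩)
        · refine Submodule.mem_sup_right (Submodule.subset_span ⟨S.erase w, ?_, ?_⟩)
          · rw [Finset.mem_coe, memN, Finset.card_erase_of_mem h3, Finset.subset_erase]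
            exact ⟨⟨⟨h1, hwT⟩, (Finset.erase_subset _ _).trans h2, by simp⟩, by omega⟩
          · simp only [Finset.insert_erase h3]
      rw [bSpace, Submodule.span_le]
      rintro _ ⟨S, hS, rfl⟩
      obtain ⟨hS, hc⟩ := Finset.mem_filter.1 (Finset.mem_coe.1 hS)
      by_cases hSΔ : S ∈ Δ
      · exact hbase S hc (Or.inl hSΔ)
      obtain ⟨h1, h2⟩ := ((h S).1 hS).resolve_left hSΔ
      by_cases hw : w ∈ S
      · exact hbase S hc (Or.inr ⟨h1, h2, hw⟩)
      -- `∂∂(S ∪ {w}) = 0` expresses `∂S` through the other facets of `S ∪ {w}`.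
      have h0 := bd_bdS K (insert w S)
      rw [bdS, Finset.sum_insert hw, map_add, map_sum, bd_single, Finset.erase_insert hw] at h0
      have h4 : bdS K S = -(sgn K (insert w S) w)⁻¹ •
          ∑ x ∈ S, bd K (Finsupp.single ((insert w S).erase x) (sgn K (insert w S) x)) := by
        rw [← neg_eq_of_add_eq_zero_right h0, smul_neg, neg_smul, neg_neg,
          inv_smul_smul₀ (sgn_ne_zero K _ _)]
      rw [h4]
      refine Submodule.smul_mem _ _ (Submodule.sum_mem _ fun x hx => ?_)
      rw [bd_single]
      refine Submodule.smul_mem _ _ (hbase _ ?_ ?_)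
      · rw [Finset.card_erase_of_mem (Finset.mem_insert_of_mem hx),
          Finset.card_insert_of_notMem hw, hc]
        rfl
      · have hxw : w ≠ x := by rintro rfl; exact hw hx
        have hsub : (insert w S).erase x ⊆ W :=
          (Finset.erase_subset _ _).trans (Finset.insert_subset hwW h2)
        by_cases hxT : x ∈ T
        · left
          have hins : insert w S ∈ Δ' :=
            (h _).2 (Or.inr ⟨h1.trans (Finset.subset_insert _ _), Finset.insert_subset hwW h2⟩)
          refine ((h _).1 (hΔ' _ hins _ (Finset.erase_subset x _))).resolve_right ?_
          rintro ⟨h5, -⟩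
          exact Finset.notMem_erase x _ (h5 hxT)
        · right
          refine ⟨?_, hsub, ?_⟩
          · rw [Finset.subset_erase]
            exact ⟨h1.trans (Finset.subset_insert _ _), hxT⟩
          · exact Finset.mem_erase.2 ⟨hxw, Finset.mem_insert_self _ _⟩
    · refine sup_le (Submodule.span_mono (Set.image_mono ?_)) (Submodule.span_le.2 ?_)
      · intro S hS
        obtain ⟨hS, hc⟩ := Finset.mem_filter.1 (Finset.mem_coe.1 hS)
        exact Finset.mem_coe.2 (Finset.mem_filter.2 ⟨(h S).2 (Or.inl hS), hc⟩)
      · rintro _ ⟨F, hF, rfl⟩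
        obtain ⟨⟨h1, h2, h3⟩, h4⟩ := (memN F).1 hF
        refine Submodule.subset_span ⟨insert w F, ?_, rfl⟩
        refine Finset.mem_coe.2 (Finset.mem_filter.2 ⟨(h _).2 (Or.inr ⟨?_, ?_⟩), ?_⟩)
        · exact h1.trans (Finset.subset_insert _ _)
        · exact Finset.insert_subset hwW h2
        · rw [Finset.card_insert_of_notMem h3, h4]
  rw [key]
  refine finrank_sup_span_image K _ _ (fun F => Finsupp.lapply F) N ?_ ?_ ?_
  · intro F hF
    obtain ⟨⟨h1, h2, h3⟩, h4⟩ := (memN F).1 hF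
    have : bSpace K Δ i ≤ LinearMap.ker (Finsupp.lapply F : (Finset ℕ →₀ K) →ₗ[K] K) := by
      rw [bSpace, Submodule.span_le]
      rintro _ ⟨S, hS, rfl⟩
      obtain ⟨hS, hc⟩ := Finset.mem_filter.1 (Finset.mem_coe.1 hS)
      rw [SetLike.mem_coe, LinearMap.mem_ker, Finsupp.lapply_apply, bdS_apply, bCoeff, if_neg]
      exact fun h5 => hd F h1 h2 (hΔ S hS F h5.1)
    exact fun x hx => this hx
  · intro F hF
    obtain ⟨⟨h1, h2, h3⟩, h4⟩ := (memN F).1 hF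
    rw [Finsupp.lapply_apply, bdS_apply, bCoeff, if_pos]
    · exact pow_ne_zero _ (by simp)
    · exact ⟨Finset.subset_insert _ _, Finset.card_insert_of_notMem h3⟩
  · intro F hF G hG hFG
    obtain ⟨⟨h1, h2, h3⟩, h4⟩ := (memN F).1 hF
    obtain ⟨-, h6⟩ := (memN G).1 hG
    rw [Finsupp.lapply_apply, bdS_apply, bCoeff, if_neg]
    rintro ⟨h7, -⟩
    exact hFG (Finset.eq_of_subset_of_card_le ((Finset.subset_insert_iff_of_notMem h3).1 h7)
      (by omega))

/-- The number of new faces of each cardinality, sorted by whether they contain `w`. -/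
lemma card_interval {Δ Δ' : Finset (Finset ℕ)} {T W : Finset ℕ}
    (h : ∀ F, F ∈ Δ' ↔ F ∈ Δ ∨ (T ⊆ F ∧ F ⊆ W)) (hd : ∀ F, T ⊆ F → F ⊆ W → F ∉ Δ)
    {w : ℕ} (hwW : w ∈ W) (hwT : w ∉ T) (i : ℕ) :
    (Δ'.filter fun S => S.card = i).card = (Δ.filter fun S => S.card = i).card +
      ((Finset.Icc T (W.erase w)).filter fun F => F.card = i).card +
      ((Finset.Icc T (W.erase w)).filter fun F => F.card + 1 = i).card := by
  have hinj : Set.InjOn (insert w : Finset ℕ → Finset ℕ)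
      ↑((Finset.Icc T (W.erase w)).filter fun F => F.card + 1 = i) := by
    intro F hF G hG hFG
    have hF : w ∉ F := fun hw => by
      have := (Finset.mem_Icc.1 (Finset.mem_filter.1 (Finset.mem_coe.1 hF)).1).2 hw
      simp at this
    have hG : w ∉ G := fun hw => by
      have := (Finset.mem_Icc.1 (Finset.mem_filter.1 (Finset.mem_coe.1 hG)).1).2 hw
      simp at this
    rw [← Finset.erase_insert hF, ← Finset.erase_insert hG]
    exact congrArg (fun X => X.erase w) hFG
  rw [← Finset.card_image_of_injOn hinj, ← Finset.card_union_of_disjoint,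
    ← Finset.card_union_of_disjoint]
  · congr 1
    ext F
    simp only [Finset.mem_union, Finset.mem_filter, Finset.mem_image, Finset.mem_Icc, h,
      Finset.subset_erase]
    constructor
    · rintro ⟨hF | ⟨h1, h2⟩, h3⟩
      · exact Or.inl (Or.inl ⟨hF, h3⟩)
      · by_cases hw : w ∈ F
        · refine Or.inr ⟨F.erase w, ⟨⟨Finset.subset_erase.2 ⟨h1, hwT⟩,
            (Finset.erase_subset _ _).trans h2, by simp⟩, ?_⟩, Finset.insert_erase hw⟩
          rw [Finset.card_erase_add_one hw, h3]
        · exact Or.inl (Or.inr ⟨⟨h1, h2, hw⟩, h3⟩)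
    · rintro ((⟨h1, h2⟩ | ⟨⟨h1, h2, h3⟩, h4⟩) | ⟨G, ⟨⟨h1, h2, h3⟩, h4⟩, rfl⟩)
      · exact ⟨Or.inl h1, h2⟩
      · exact ⟨Or.inr ⟨h1, h2⟩, h4⟩
      · refine ⟨Or.inr ⟨h1.trans (Finset.subset_insert _ _), Finset.insert_subset hwW h2⟩, ?_⟩
        rw [Finset.card_insert_of_notMem h3, h4]
  · rw [Finset.disjoint_left]
    intro F hF hF'
    obtain ⟨G, hG, rfl⟩ := Finset.mem_image.1 hF'
    simp only [Finset.mem_union, Finset.mem_filter, Finset.mem_Icc,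
      Finset.subset_erase] at hF hG
    rcases hF with hF | hF
    · exact hd _ (hG.1.1.trans (Finset.subset_insert _ _))
        (Finset.insert_subset hwW hG.1.2.1) hF.1
    · exact hF.1.2.2 (Finset.mem_insert_self _ _)
  · rw [Finset.disjoint_left]
    intro F hF hF'
    simp only [Finset.mem_filter, Finset.mem_Icc,
      Finset.subset_erase] at hF hF'
    exact hd _ hF'.1.1 hF'.1.2.1 hF.1

/-- Adding a nondegenerate interval of faces does not change the homology. -/
lemma redH_interval {Δ Δ' : Finset (Finset ℕ)} (hΔ : IsCx Δ) (hΔ' : IsCx Δ')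
    {T W : Finset ℕ} (h : ∀ F, F ∈ Δ' ↔ F ∈ Δ ∨ (T ⊆ F ∧ F ⊆ W))
    (hd : ∀ F, T ⊆ F → F ⊆ W → F ∉ Δ)
    {w : ℕ} (hwW : w ∈ W) (hwT : w ∉ T) (i : ℕ) : redH K Δ' i = redH K Δ i := by
  have hr := finrank_bSpace_interval K hΔ hΔ' h hd hwW hwT
  have hc := card_interval h hd hwW hwT
  cases i with
  | zero =>
    have h1 := redH_zero_add K hΔ
    have h2 := redH_zero_add K hΔ'
    have h3 := hr 0
    have h4 := hc 0
    simp only [Nat.add_eq_zero_iff, one_ne_zero, and_false, Finset.filter_false,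
      Finset.card_empty] at h4
    omega
  | succ i =>
    have h1 := redH_succ_add K hΔ i
    have h2 := redH_succ_add K hΔ' i
    have h3 := hr i
    have h4 := hr (i + 1)
    have h5 := hc (i + 1)
    simp only [Nat.add_right_cancel_iff] at h5
    omega

/-- Adding a single face `T` whose boundary lies in a vanishing homology group creates
exactly one new homology class. -/
lemma redH_single {Δ Δ' : Finset (Finset ℕ)} (hΔ : IsCx Δ) (hΔ' : IsCx Δ')
    {T : Finset ℕ} (h : ∀ F, F ∈ Δ' ↔ F ∈ Δ ∨ F = T) (hd : T ∉ Δ)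
    (h0 : ∀ j, T.card = j + 1 → redH K Δ j = 0) (i : ℕ) :
    redH K Δ' i = redH K Δ i + if T.card = i then 1 else 0 := by
  have hc : ∀ i, (Δ'.filter fun S => S.card = i).card =
      (Δ.filter fun S => S.card = i).card + if T.card = i then 1 else 0 := by
    intro i
    have : Δ' = insert T Δ := by ext F; rw [h, Finset.mem_insert, or_comm]
    rw [this, Finset.filter_insert]
    split_ifs with hi
    · rw [Finset.card_insert_of_notMem fun h => hd (Finset.mem_filter.1 h).1]
    · rfl
  have hr0 : ∀ i, T.card ≠ i + 1 → bSpace K Δ' i = bSpace K Δ i := by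
    intro i hi
    unfold bSpace
    congr 3
    ext F
    simp only [Finset.mem_filter, h]
    constructor
    · rintro ⟨h1 | rfl, h2⟩
      · exact ⟨h1, h2⟩
      · exact absurd h2 hi
    · rintro ⟨h1, h2⟩
      exact ⟨Or.inl h1, h2⟩
  have hmono : ∀ i, bSpace K Δ i ≤ bSpace K Δ' i := by
    intro i
    refine Submodule.span_mono (Set.image_mono ?_)
    intro S hS
    obtain ⟨hS, hc⟩ := Finset.mem_filter.1 (Finset.mem_coe.1 hS)
    exact Finset.mem_coe.2 (Finset.mem_filter.2 ⟨(h S).2 (Or.inl hS), hc⟩)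
  have hr : ∀ i, Module.finrank K (bSpace K Δ' i) = Module.finrank K (bSpace K Δ i) := by
    intro i
    by_cases hi : T.card = i + 1
    · -- The boundaries in this degree already fill the space of cycles.
      refine le_antisymm ?_ (Submodule.finrank_mono (hmono i))
      have h1 := h0 i hi
      have h2 := hc i
      rw [if_neg (by omega)] at h2
      cases i with
      | zero =>
        have h3 := redH_zero_add K hΔ
        have h4 := finrank_bSpace_zero_le K hΔ'
        omega
      | succ i =>
        have h3 := redH_succ_add K hΔ i
        have h4 := finrank_bSpace_add_le K hΔ' i
        rw [hr0 i (by omega)] at h4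
        omega
    · rw [hr0 i hi]
  have h2 := hc i
  cases i with
  | zero =>
    have h3 := redH_zero_add K hΔ
    have h4 := redH_zero_add K hΔ'
    have h5 := hr 0
    omega
  | succ i =>
    have h3 := redH_succ_add K hΔ i
    have h4 := redH_succ_add K hΔ' i
    have h5 := hr i
    have h6 := hr (i + 1)
    omega

end Chains
end SqueezedSpheres

namespace SqueezedSpheres

/-! ### Betti numbers from linear quotients -/

section LinQuot

lemma degMon_add (u v : Mon) : degMon (u + v) = degMon u + degMon v :=
  Finsupp.sum_add_index' (fun _ => rfl) (fun _ _ _ => rfl)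

lemma degMon_toFinsupp (s : Multiset ℕ) : degMon (Multiset.toFinsupp s) = Multiset.card s :=
  Multiset.toFinsupp_sum_eq s

lemma degMon_sqf (S : Finset ℕ) : degMon (sqf S) = S.card := degMon_toFinsupp _

lemma degMon_mono {u v : Mon} (h : u ≤ v) : degMon u ≤ degMon v := by
  obtain ⟨c, rfl⟩ := exists_add_of_le h
  rw [degMon_add]
  omega

lemma eq_of_le_of_degMon_le {u v : Mon} (h : u ≤ v) (hd : degMon v ≤ degMon u) : u = v := by
  obtain ⟨c, rfl⟩ := exists_add_of_le h
  rw [degMon_add] at hd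
  have h0 : degMon c = 0 := by omega
  have : c = 0 := by
    ext i
    by_contra hi
    have := Finset.sum_eq_zero_iff.1 h0 i (Finsupp.mem_support_iff.2 hi)
    exact hi this
  rw [this, add_zero]

lemma sqf_apply (S : Finset ℕ) (i : ℕ) : sqf S i = if i ∈ S then 1 else 0 := by
  rw [sqf, Multiset.toFinsupp_apply, Multiset.count_eq_of_nodup S.nodup]
  rfl

lemma sqf_injective : Function.Injective sqf := by
  intro S T h
  ext i
  have := DFunLike.congr_fun h i
  rw [sqf_apply, sqf_apply] at this
  split_ifs at this <;> simp_all

lemma mem_koszulCx {G : Finset Mon} {b : Mon} {F : Finset ℕ} :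
    F ∈ koszulCx G b ↔ F ⊆ b.support ∧ ∃ g ∈ G, g ≤ b - sqf F := by
  rw [koszulCx, Finset.mem_filter, Finset.mem_powerset]
  rfl

lemma isCx_koszulCx (G : Finset Mon) (b : Mon) : IsCx (koszulCx G b) := by
  intro S hS T hT
  rw [mem_koszulCx] at hS ⊢
  obtain ⟨h1, g, hg, h2⟩ := hS
  refine ⟨hT.trans h1, g, hg, h2.trans ?_⟩
  refine tsub_le_tsub_left (fun i => ?_) b
  rw [sqf_apply, sqf_apply]
  split_ifs with h3 h4
  · rfl
  · exact absurd (hT h3) h4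
  · exact Nat.zero_le _
  · rfl

/-- `G` indexes monomials `U w` with linear quotients, added in the order of the key `κ`
(ties broken arbitrarily): whenever `s` consists of the monomials preceding `U u`, the colon
ideal of `(U w : w ∈ s)` by `U u` is generated by the variables in `A u`. -/
structure LinQuot {ι κ : Type} [LinearOrder κ] (G : Finset ι) (key : ι → κ) (U : ι → Mon)
    (A : ι → Finset ℕ) : Prop where
  deg : ∀ w ∈ G, ∀ u ∈ G, key w ≤ key u → degMon (U w) ≤ degMon (U u)
  colon : ∀ u ∈ G, ∀ s ⊆ G, u ∉ s → (∀ w ∈ G, key w < key u → w ∈ s) →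
    (∀ w ∈ s, key w ≤ key u) →
    ∀ c : Mon, (∃ w ∈ s, U w ≤ U u + c) ↔ ∃ i ∈ A u, c i ≠ 0

variable (K : Type) [Field K] {ι κ : Type} [LinearOrder κ] {G : Finset ι} {key : ι → κ}
  {U : ι → Mon} {A : ι → Finset ℕ}

/-- The effect on the homology of the upper Koszul complex of adding one more generator `U u`.
Writing `b = U u + c`, the new faces form the interval between `c.support ∩ A u` and `c.support`
(if `c` is at most `1` on `A u`; otherwise there are none). The homology changes only if this
interval is a single face, that is, if `c = sqf T` with `T ⊆ A u`. The hypothesis `h0` says that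
the boundary of this face then already bounds. -/
lemma redH_koszulCx_insert (s : Finset ι) (u : ι) (b : Mon)
    (hcolon : ∀ c : Mon, (∃ w ∈ s, U w ≤ U u + c) ↔ ∃ i ∈ A u, c i ≠ 0)
    (h0 : ∀ T ⊆ A u, b = U u + sqf T → ∀ j, T.card = j + 1 →
      redH K (koszulCx (s.image U) b) j = 0) (i : ℕ) :
    redH K (koszulCx ((insert u s).image U) b) i = redH K (koszulCx (s.image U) b) i +
      ∑ T ∈ (A u).powersetCard i, if b = U u + sqf T then 1 else 0 := by
  have hmem : ∀ F, F ∈ koszulCx ((insert u s).image U) b ↔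
      F ∈ koszulCx (s.image U) b ∨ (F ⊆ b.support ∧ U u ≤ b - sqf F) := by
    intro F
    rw [mem_koszulCx, mem_koszulCx, Finset.image_insert]
    simp only [Finset.mem_insert, exists_eq_or_imp]
    rw [and_or_left, or_comm]
  by_cases hub : U u ≤ b
  swap
  · have heq : koszulCx ((insert u s).image U) b = koszulCx (s.image U) b := by
      ext F
      rw [hmem, or_iff_left]
      exact fun h => hub (h.2.trans tsub_le_self)
    rw [heq, Finset.sum_eq_zero, add_zero]
    intro T _
    rw [if_neg]
    rintro rfl
    exact hub le_self_add
  obtain ⟨c, rfl⟩ := exists_add_of_le hub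
  -- The candidates for new faces are the subsets of the support of `c`.
  have hcand : ∀ F : Finset ℕ, (F ⊆ (U u + c).support ∧ U u ≤ U u + c - sqf F) ↔
      F ⊆ c.support := by
    intro F
    constructor
    · rintro ⟨h1, h2⟩ x hx
      have h3 := h2 x
      have h4 := Finsupp.mem_support_iff.1 (h1 hx)
      rw [Finsupp.tsub_apply, Finsupp.add_apply, sqf_apply, if_pos hx] at h3
      rw [Finsupp.add_apply] at h4
      rw [Finsupp.mem_support_iff]
      omega
    · intro h
      refine ⟨fun x hx => ?_, fun x => ?_⟩
      · have := Finsupp.mem_support_iff.1 (h hx)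
        rw [Finsupp.mem_support_iff, Finsupp.add_apply]
        omega
      · rw [Finsupp.tsub_apply, Finsupp.add_apply, sqf_apply]
        split_ifs with hx
        · have := Finsupp.mem_support_iff.1 (h hx)
          omega
        · omega
  have hold : ∀ F : Finset ℕ, F ⊆ c.support →
      (F ∈ koszulCx (s.image U) (U u + c) ↔ ∃ i ∈ A u, c i ≠ sqf F i) := by
    intro F hF
    have h1 := (hcand F).2 hF
    have hle : sqf F ≤ c := by
      intro x
      rw [sqf_apply]
      split_ifs with hx
      · exact Nat.one_le_iff_ne_zero.2 (Finsupp.mem_support_iff.1 (hF hx))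
      · exact Nat.zero_le _
    rw [mem_koszulCx, and_iff_right h1.1, add_tsub_assoc_of_le hle]
    simp only [Finset.mem_image, exists_exists_and_eq_and]
    rw [hcolon]
    refine exists_congr fun x => and_congr_right fun _ => ?_
    have := hle x
    rw [Finsupp.tsub_apply]
    omega
  simp only [add_right_inj]
  by_cases hA : ∃ x ∈ A u, 2 ≤ c x
  · obtain ⟨x, hxA, hx⟩ := hA
    have heq : koszulCx ((insert u s).image U) (U u + c) = koszulCx (s.image U) (U u + c) := by
      ext F
      rw [hmem, hcand, or_iff_left_iff_imp]
      intro hF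
      rw [hold F hF]
      refine ⟨x, hxA, ?_⟩
      rw [sqf_apply]
      split_ifs <;> omega
    rw [heq, Finset.sum_eq_zero, add_zero]
    intro T _
    rw [if_neg]
    rintro rfl
    rw [sqf_apply] at hx
    split_ifs at hx <;> omega
  push Not at hA
  have hold' : ∀ F : Finset ℕ, F ⊆ c.support →
      (F ∉ koszulCx (s.image U) (U u + c) ↔ c.support ∩ A u ⊆ F) := by
    intro F hF
    rw [hold F hF]
    push Not
    constructor
    · intro h x hx
      obtain ⟨hx1, hx2⟩ := Finset.mem_inter.1 hx
      have h3 := h x hx2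
      rw [Finsupp.mem_support_iff, h3, sqf_apply] at hx1
      by_contra hxF
      simp [hxF] at hx1
    · intro h x hx
      have h2 := hA x hx
      rw [sqf_apply]
      split_ifs with hxF
      · have := Finsupp.mem_support_iff.1 (hF hxF)
        omega
      · by_contra h3
        exact hxF (h (Finset.mem_inter.2 ⟨Finsupp.mem_support_iff.2 h3, hx⟩))
  have hnew : ∀ F, F ∈ koszulCx ((insert u s).image U) (U u + c) ↔
      F ∈ koszulCx (s.image U) (U u + c) ∨ (c.support ∩ A u ⊆ F ∧ F ⊆ c.support) := by
    intro F
    rw [hmem, hcand]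
    by_cases hF : F ⊆ c.support
    · have := hold' F hF
      tauto
    · tauto
  by_cases hsub : c.support ⊆ A u
  · have hT : c.support ∩ A u = c.support := Finset.inter_eq_left.2 hsub
    have hc : c = sqf c.support := by
      ext x
      rw [sqf_apply]
      split_ifs with hx
      · have := hA x (hsub hx)
        have := Finsupp.mem_support_iff.1 hx
        omega
      · exact Finsupp.notMem_support_iff.1 hx
    have hnew' : ∀ F, F ∈ koszulCx ((insert u s).image U) (U u + c) ↔
        F ∈ koszulCx (s.image U) (U u + c) ∨ F = c.support := by
      intro F
      rw [hnew, hT, Finset.Subset.antisymm_iff, and_comm]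
    rw [redH_single K (isCx_koszulCx _ _) (isCx_koszulCx _ _) hnew'
      ((hold' _ le_rfl).2 (by rw [hT]))
      (fun j hj => h0 c.support hsub (by rw [← hc]) j hj)]
    congr 1
    split_ifs with hi
    · rw [Finset.sum_eq_single_of_mem c.support (Finset.mem_powersetCard.2 ⟨hsub, hi⟩),
        if_pos hc]
      intro T _ hne
      rw [if_neg]
      intro h
      exact hne (sqf_injective (h.symm.trans hc))
    · rw [Finset.sum_eq_zero]
      intro T hT'
      rw [if_neg]
      intro h
      have h2 : T = c.support := sqf_injective (h.symm.trans hc)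
      rw [← h2] at hi
      exact hi (Finset.mem_powersetCard.1 hT').2
  · obtain ⟨w, hw, hwA⟩ := Finset.not_subset.1 hsub
    rw [redH_interval K (isCx_koszulCx _ _) (isCx_koszulCx _ _) hnew
      (fun F h1 h2 => (hold' F h2).2 h1) hw (fun h => hwA (Finset.mem_inter.1 h).2),
      Finset.sum_eq_zero, add_zero]
    intro T hT
    rw [if_neg]
    rintro rfl
    rw [Finsupp.mem_support_iff, sqf_apply] at hw
    exact hwA ((Finset.mem_powersetCard.1 hT).1 (by by_contra h; simp [h] at hw))

/-- The multigraded Betti numbers of an ideal with linear quotients: each generator `U u`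
contributes `1` in homological degree `#T` and multidegree `U u + sqf T`, for every `T ⊆ A u`. -/
lemma redH_koszulCx (h : LinQuot G key U A) (b : Mon) (s : Finset ι) (hs : s ⊆ G)
    (hlow : ∀ w ∈ G, ∀ x ∈ s, key w < key x → w ∈ s) (i : ℕ) :
    redH K (koszulCx (s.image U) b) i =
      ∑ u ∈ s, ∑ T ∈ (A u).powersetCard i, if b = U u + sqf T then 1 else 0 := by
  induction s using Finset.induction_on_max_value key generalizing i with
  | empty =>
    have hcx : koszulCx (Finset.image U ∅) b = ∅ := by
      ext F; simp [mem_koszulCx]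
    rw [hcx, Finset.sum_empty]
    have hE : IsCx ∅ := fun S hS => by simp at hS
    cases i with
    | zero => have := redH_zero_add K hE; simp at this; omega
    | succ i => have := redH_succ_add K hE i; simp at this; omega
  | insert u s hu hmax ih =>
    have hsG : s ⊆ G := (Finset.subset_insert _ _).trans hs
    have huG : u ∈ G := hs (Finset.mem_insert_self _ _)
    have ih := ih hsG fun w hw x hx hlt => by
      refine (Finset.mem_insert.1
        (hlow w hw x (Finset.mem_insert_of_mem hx) hlt)).resolve_left ?_
      rintro rfl
      exact absurd (hmax x hx) (not_le.2 hlt)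
    have hcolon := h.colon u huG s hsG hu
      (fun w hw hlt => (Finset.mem_insert.1
        (hlow w hw u (Finset.mem_insert_self _ _) hlt)).resolve_left
          (by rintro rfl; exact lt_irrefl _ hlt)) hmax
    rw [redH_koszulCx_insert K s u b hcolon, ih, Finset.sum_insert hu, add_comm]
    -- Earlier generators have smaller or equal degree, so they cannot contribute to homology
    -- one step below the new face in the same multidegree.
    intro T hT hb j hj
    rw [ih]
    refine Finset.sum_eq_zero fun w hw => Finset.sum_eq_zero fun T' hT' => if_neg ?_
    intro hb'
    have h1 := congrArg degMon (hb.symm.trans hb')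
    rw [degMon_add, degMon_add, degMon_sqf, degMon_sqf, (Finset.mem_powersetCard.1 hT').2] at h1
    have h2 := h.deg w (hsG hw) u huG (hmax w hw)
    omega

end LinQuot
end SqueezedSpheres

namespace SqueezedSpheres

/-! ### Monomial ideals and their Betti numbers -/

section Ideals
variable (K : Type) [Field K]

lemma memMon_span_iff (S : Set Mon) (u : Mon) :
    memMon K (Ideal.span ((fun u => mono K u) '' S)) u ↔ ∃ g ∈ S, g ≤ u := by
  unfold memMon mono
  rw [MvPolynomial.mem_ideal_span_monomial_image, MvPolynomial.support_monomial,
    if_neg one_ne_zero]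
  simp

lemma memMon_monSpan (G : Finset Mon) (u : Mon) :
    memMon K (monSpan K G) u ↔ ∃ g ∈ G, g ≤ u :=
  memMon_span_iff K _ u

variable {ι κ : Type} [LinearOrder κ] {G : Finset ι} {key : ι → κ}
  {U : ι → Mon} {A : ι → Finset ℕ}

/-- An ideal with linear quotients is minimally generated by the monomials `U u`, so these
occur in every finite set of generators. -/
lemma LinQuot.mem_of_gens (h : LinQuot G key U A) {G' : Finset Mon}
    (hG : ∀ b, (∃ g ∈ G', g ≤ b) ↔ ∃ u ∈ G, U u ≤ b) {u : ι} (hu : u ∈ G) : U u ∈ G' := by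
  obtain ⟨g, hg, hgu⟩ := (hG (U u)).2 ⟨u, hu, le_rfl⟩
  obtain ⟨w, hw, hwg⟩ := (hG g).1 ⟨g, hg, le_rfl⟩
  have hkey : ¬ key w < key u := by
    intro hlt
    have := (h.colon u hu (G.filter fun w => key w < key u) (Finset.filter_subset _ _)
      (by simp) (fun w hw hlt => by simp [hw, hlt])
      (fun w hw => (Finset.mem_filter.1 hw).2.le) 0).1
      ⟨w, Finset.mem_filter.2 ⟨hw, hlt⟩, by rw [add_zero]; exact hwg.trans hgu⟩
    simp at this
  have hdeg := h.deg u hu w hw (not_lt.1 hkey)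
  have h1 : U w = U u := eq_of_le_of_degMon_le (hwg.trans hgu) hdeg
  have h2 : g = U u := le_antisymm hgu (h1 ▸ hwg)
  exact h2 ▸ hg

/-- The multidegrees carrying homology are bounded by the sum of any set of generators. -/
lemma LinQuot.le_sum (h : LinQuot G key U A) {G' : Finset Mon}
    (hG : ∀ b, (∃ g ∈ G', g ≤ b) ↔ ∃ u ∈ G, U u ≤ b) {u : ι} (hu : u ∈ G) {T : Finset ℕ}
    (hT : T ⊆ A u) : U u + sqf T ≤ G'.sum id := by
  have hle : ∀ w ∈ G, U w ≤ G'.sum id := fun w hw =>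
    Finset.single_le_sum (f := id) (fun _ _ => zero_le) (h.mem_of_gens hG hw)
  intro i
  rw [Finsupp.add_apply, sqf_apply]
  split_ifs with hi
  · -- Some earlier generator has larger exponent at `i`.
    obtain ⟨w, hw, hwu⟩ := (h.colon u hu (G.filter fun w => key w < key u)
      (Finset.filter_subset _ _) (by simp) (fun w hw hlt => by simp [hw, hlt])
      (fun w hw => (Finset.mem_filter.1 hw).2.le) (Finsupp.single i 1)).2
      ⟨i, hT hi, by simp⟩
    have hnot : ¬ U w ≤ U u := fun hle' => by
      have := (h.colon u hu (G.filter fun w => key w < key u) (Finset.filter_subset _ _)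
        (by simp) (fun w hw hlt => by simp [hw, hlt])
        (fun w hw => (Finset.mem_filter.1 hw).2.le) 0).1 ⟨w, hw, by rwa [add_zero]⟩
      simp at this
    refine le_trans ?_ (hle w (Finset.mem_filter.1 hw).1 i)
    by_contra hlt
    refine hnot fun k => ?_
    have hk := hwu k
    rw [Finsupp.add_apply, Finsupp.single_apply] at hk
    split_ifs at hk with hik
    · subst hik; omega
    · exact hk
  · exact hle u hu i

/-- The graded Betti numbers of an ideal with linear quotients. -/
lemma betti_of_linQuot (h : LinQuot G key U A) {I : Ideal (MvPolynomial ℕ K)}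
    (hI : I = monSpan K (G.image U)) (i j : ℕ) :
    betti K I i j = ∑ u ∈ G, if degMon (U u) + i = j then (A u).card.choose i else 0 := by
  have hex : ∃ G : Finset Mon, I = monSpan K G := ⟨_, hI⟩
  rw [betti, dif_pos hex]
  have hG : ∀ b, (∃ g ∈ hex.choose, g ≤ b) ↔ ∃ u ∈ G, U u ≤ b := by
    intro b
    rw [← memMon_monSpan K, ← hex.choose_spec, hI, memMon_monSpan]
    simp
  have hcx : ∀ b, koszulCx hex.choose b = koszulCx (G.image U) b := by
    intro b
    ext F
    rw [mem_koszulCx, mem_koszulCx, hG]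
    simp
  rw [bettiGens]
  simp only [hcx, redH_koszulCx K h _ G Finset.Subset.rfl (fun w hw _ _ _ => hw)]
  rw [Finset.sum_comm]
  refine Finset.sum_congr rfl fun u hu => ?_
  rw [Finset.sum_comm]
  simp only [Finset.sum_ite_eq']
  rw [Finset.sum_congr rfl (g := fun _ => if degMon (U u) + i = j then 1 else 0)]
  · rw [Finset.sum_const, Finset.card_powersetCard, smul_eq_mul, mul_ite, mul_one, mul_zero]
  · intro T hT
    obtain ⟨hT1, hT2⟩ := Finset.mem_powersetCard.1 hT
    have h1 := h.le_sum hG hu hT1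
    simp only [Finset.mem_filter, Finset.mem_Iic, h1, true_and, degMon_add, degMon_sqf, hT2]

/-! ### Minimal generators -/

lemma not_mem_GSet_of_lt {I : Ideal (MvPolynomial ℕ K)} {G : Finset Mon}
    (hI : I = monSpan K G) {u v : Mon} (hv : memMon K I v) (h : v < u) : u ∉ GSet K I := by
  intro hu
  obtain ⟨i, hi⟩ : ∃ i, v i < u i := by
    by_contra! hc
    exact h.not_ge hc
  refine hu.2 i (Finsupp.mem_support_iff.2 (by omega)) ?_
  rw [hI, memMon_monSpan] at hv ⊢
  obtain ⟨g, hg, hgv⟩ := hv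
  refine ⟨g, hg, hgv.trans fun k => ?_⟩
  rw [Finsupp.tsub_apply, Finsupp.single_apply]
  have := h.le k
  split_ifs with hik
  · subst hik; omega
  · simpa using this

lemma GSet_subset {I : Ideal (MvPolynomial ℕ K)} {G : Finset Mon}
    (hI : I = monSpan K G) : GSet K I ⊆ ↑G := by
  intro u hu
  have hu1 := hu.1
  rw [hI, memMon_monSpan] at hu1
  obtain ⟨g, hg, hgu⟩ := hu1
  rcases hgu.eq_or_lt with rfl | hlt
  · exact hg
  · refine absurd hu (not_mem_GSet_of_lt K hI (v := g) ?_ hlt)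
    rw [hI, memMon_monSpan]
    exact ⟨g, hg, le_rfl⟩

lemma exists_GSet_le {I : Ideal (MvPolynomial ℕ K)} {u : Mon} (hu : memMon K I u) :
    ∃ g ∈ GSet K I, g ≤ u := by
  induction hn : degMon u using Nat.strong_induction_on generalizing u with
  | _ n ih =>
    by_cases h : u ∈ GSet K I
    · exact ⟨u, h, le_rfl⟩
    · have : ∃ i ∈ u.support, memMon K I (u - Finsupp.single i 1) := by
        by_contra! hc
        exact h ⟨hu, hc⟩
      obtain ⟨i, hi, hm⟩ := this
      have hlt : degMon (u - Finsupp.single i 1) < degMon u := by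
        by_contra hge
        have h1 := eq_of_le_of_degMon_le (tsub_le_self : u - Finsupp.single i 1 ≤ u)
          (not_lt.1 hge)
        have h2 := DFunLike.congr_fun h1 i
        have h3 := Finsupp.mem_support_iff.1 hi
        simp at h2
        omega
      obtain ⟨g, hg, hgu⟩ := ih _ (hn ▸ hlt) hm rfl
      exact ⟨g, hg, hgu.trans tsub_le_self⟩

end Ideals
end SqueezedSpheres

namespace SqueezedSpheres

/-! ### Colon ideals of shifted index lists -/

section Lists

/-- The monomial `x_{i₁}⋯x_{i_k}` of a list `[i₁, …, i_k]` of indices. -/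
def monL (L : List ℕ) : Mon := Multiset.toFinsupp (↑L : Multiset ℕ)

/-- The action of `α^a` on lists of indices. -/
def alphaL (a : ℕ → ℕ) (L : List ℕ) : List ℕ := L.mapIdx fun j i => i + a j

/-- The smallest value allowed in position `l` by the entry of `L` before it. -/
def lowEnd (L : List ℕ) (l : ℕ) : ℕ := if l = 0 then 0 else L.getD (l - 1) 0 + 1

/-- The variables generating the colon ideal at the generator `α^a(L)`: the integers in the
gaps of `L`, where the gap before position `l` is translated by `a l`. -/
def gapSet (a : ℕ → ℕ) (L : List ℕ) : Finset ℕ :=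
  (Finset.range L.length).biUnion fun l => Finset.Ico (lowEnd L l + a l) (L.getD l 0 + a l)

/-- The order of the generators: by degree, then by the sum of the indices. It refines `≼`. -/
def lkey (L : List ℕ) : ℕ ×ₗ ℕ := toLex (L.length, L.sum)

/-- The lists with property `P` none of whose proper initial segments has `P`. When `P` says
that the monomial lies in a squarefree strongly stable ideal, these are the minimal
generators. -/
def IsGen (P : List ℕ → Prop) (L : List ℕ) : Prop :=
  P L ∧ ∀ e < L.length, ¬ P (L.take e)

lemma monL_apply (L : List ℕ) (k : ℕ) : monL L k = L.count k := by
  rw [monL, Multiset.toFinsupp_apply, Multiset.coe_count]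

lemma degMon_monL (L : List ℕ) : degMon (monL L) = L.length := by
  rw [monL, degMon_toFinsupp, Multiset.coe_card]

lemma length_alphaL (a : ℕ → ℕ) (L : List ℕ) : (alphaL a L).length = L.length := by
  simp [alphaL]

lemma monL_take_le (L : List ℕ) (e : ℕ) : monL (L.take e) ≤ monL L := fun k => by
  rw [monL_apply, monL_apply]
  exact (List.take_sublist e L).count_le k

lemma alphaL_take (a : ℕ → ℕ) (L : List ℕ) (e : ℕ) :
    alphaL a (L.take e) = (alphaL a L).take e := by
  apply List.ext_getElem
  · simp [alphaL]
  · intro i h1 h2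
    simp [alphaL]

lemma sum_le_of_forall₂ {L L' : List ℕ} (h : List.Forall₂ (· ≤ ·) L L') : L.sum ≤ L'.sum := by
  induction h with
  | nil => simp
  | cons h _ ih => simp only [List.sum_cons]; omega

lemma eq_of_forall₂_of_sum_le {L L' : List ℕ} (h : List.Forall₂ (· ≤ ·) L L')
    (hs : L'.sum ≤ L.sum) : L = L' := by
  induction h with
  | nil => rfl
  | cons h h' ih =>
    simp only [List.sum_cons] at hs
    have := sum_le_of_forall₂ h'
    rw [ih (by omega)]
    congr 1
    omega

lemma lt_of_pairwise {L : List ℕ} (hL : L.Pairwise (· < ·)) {i j : ℕ} (hij : i < j)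
    (hj : j < L.length) : L[i] < L[j] :=
  List.pairwise_iff_getElem.1 hL i j _ _ hij

lemma le_of_pairwise {L : List ℕ} (hL : L.Pairwise (· < ·)) {i j : ℕ} (hij : i ≤ j)
    (hj : j < L.length) : L[i] ≤ L[j] := by
  rcases hij.eq_or_lt with rfl | h
  · exact le_rfl
  · exact (lt_of_pairwise hL h hj).le

lemma mem_gapSet {a : ℕ → ℕ} {L : List ℕ} {k : ℕ} :
    k ∈ gapSet a L ↔ ∃ l, ∃ h : l < L.length, lowEnd L l + a l ≤ k ∧ k < L[l] + a l := by
  simp only [gapSet, Finset.mem_biUnion, Finset.mem_range, Finset.mem_Ico]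
  refine exists_congr fun l => ⟨fun ⟨h, h1, h2⟩ => ⟨h, h1, ?_⟩, fun ⟨h, h1, h2⟩ => ⟨h, h1, ?_⟩⟩
  · rwa [List.getD_eq_getElem _ _ h] at h2
  · rwa [List.getD_eq_getElem _ _ h]

/-- Since `a` is nondecreasing, translating the gaps keeps them disjoint, so the number of
variables of a colon ideal does not depend on `a`. -/
lemma card_gapSet {a : ℕ → ℕ} (ha : Monotone a) {L : List ℕ} (hL : L.Pairwise (· < ·)) :
    (gapSet a L).card = ∑ l ∈ Finset.range L.length, (L.getD l 0 - lowEnd L l) := by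
  have key : ∀ l l', l < l' → l' < L.length →
      Disjoint (Finset.Ico (lowEnd L l + a l) (L.getD l 0 + a l))
        (Finset.Ico (lowEnd L l' + a l') (L.getD l' 0 + a l')) := by
    intro l l' hll hl'
    rw [Finset.disjoint_left]
    intro k hk hk'
    rw [Finset.mem_Ico] at hk hk'
    have h1 := ha hll.le
    have h2 := le_of_pairwise hL (show l ≤ l' - 1 by omega) (by omega)
    rw [lowEnd, if_neg (by omega : l' ≠ 0), List.getD_eq_getElem _ _ (by omega)] at hk'
    rw [List.getD_eq_getElem _ _ (by omega)] at hk
    omega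
  rw [gapSet, Finset.card_biUnion]
  · refine Finset.sum_congr rfl fun l _ => ?_
    rw [Nat.card_Ico]
    omega
  · intro l hl l' hl' hne
    rw [Finset.mem_coe, Finset.mem_range] at hl hl'
    rcases lt_or_gt_of_ne hne with h | h
    · exact key l l' h hl'
    · exact (key l' l h hl).symm

variable {P : List ℕ → Prop}

lemma exists_isGen_take {L : List ℕ} (h : P L) :
    ∃ e ≤ L.length, IsGen P (L.take e) := by
  have hex : ∃ e, P (L.take e) := ⟨L.length, by rwa [List.take_length]⟩
  refine ⟨Nat.find hex, Nat.find_min' hex (by rwa [List.take_length]), Nat.find_spec hex, ?_⟩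
  intro e he hP
  rw [List.length_take] at he
  rw [List.take_take, min_eq_left (by omega)] at hP
  exact Nat.find_min hex (by omega) hP

/-- Any multiple of the generator of `u` that an earlier generator divides contains an extra
variable from the gaps of `u`. -/
lemma colon_forward (hP2 : ∀ L L', P L → L'.Pairwise (· < ·) → List.Forall₂ (· ≤ ·) L' L → P L')
    (hP1 : ∀ L, P L → L.Pairwise (· < ·)) {a : ℕ → ℕ} (ha : Monotone a) {u w : List ℕ}
    (hu : IsGen P u) (hw : IsGen P w) (hne : w ≠ u) (hkey : lkey w ≤ lkey u) {c : Mon}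
    (hle : monL (alphaL a w) ≤ monL (alphaL a u) + c) : ∃ k ∈ gapSet a u, c k ≠ 0 := by
  have hus := hP1 u hu.1
  have hws := hP1 w hw.1
  rw [lkey, lkey, Prod.Lex.toLex_le_toLex] at hkey
  -- The variable comes from the first position where `w` is smaller than `u`.
  by_cases H : ∃ m, ∃ h1 : m < w.length, ∃ h2 : m < u.length, w[m] < u[m]
  · obtain ⟨h1, h2, h3⟩ := Nat.find_spec H
    have hmin : ∀ j < Nat.find H, ∀ h1 : j < w.length, ∀ h2 : j < u.length, u[j] ≤ w[j] :=
      fun j hj h1 h2 => not_lt.1 fun h => Nat.find_min H hj ⟨h1, h2, h⟩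
    generalize Nat.find H = m at h1 h2 h3 hmin
    have hprev : ∀ j, ∀ hj : j < m, u[j] < w[m] := fun j hj =>
      (hmin j hj _ _).trans_lt (lt_of_pairwise hws hj h1)
    refine ⟨w[m] + a m, mem_gapSet.2 ⟨m, h2, ?_, by omega⟩, fun hc => ?_⟩
    · rw [lowEnd]
      split_ifs with hm
      · omega
      · rw [List.getD_eq_getElem _ _ (by omega)]
        have := hprev (m - 1) (by omega)
        omega
    · have h4 := hle (w[m] + a m)
      rw [Finsupp.add_apply, hc, add_zero, monL_apply, monL_apply] at h4
      have h5 : w[m] + a m ∈ alphaL a w := by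
        rw [List.mem_iff_getElem]
        exact ⟨m, by rwa [length_alphaL], by simp [alphaL]⟩
      have h6 : w[m] + a m ∈ alphaL a u :=
        List.count_pos_iff.1 (lt_of_lt_of_le (List.count_pos_iff.2 h5) h4)
      rw [List.mem_iff_getElem] at h6
      obtain ⟨j, hj, hjk⟩ := h6
      have hj' : j < u.length := by rwa [length_alphaL] at hj
      have hjk' : u[j] + a j = w[m] + a m := by rw [← hjk]; simp [alphaL]
      rcases lt_or_ge j m with hjm | hjm
      · have := hprev j hjm
        have := ha hjm.le
        omega
      · have := le_of_pairwise hus hjm hj'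
        have := ha hjm
        omega
  · -- Otherwise an initial segment of `u` precedes `w`, and minimality forces `u = w`.
    push Not at H
    have hlen : w.length ≤ u.length := by rcases hkey with h | h <;> simp at h <;> omega
    have hF : List.Forall₂ (· ≤ ·) (u.take w.length) w := by
      rw [List.forall₂_iff_get]
      refine ⟨by simp [hlen], fun i h1 h2 => ?_⟩
      simpa using H i h2 (by omega)
    have hPt := hP2 _ _ hw.1 (hus.sublist (List.take_sublist _ _)) hF
    have hlen' : w.length = u.length := by
      by_contra h
      exact hu.2 _ (by omega) hPt
    rw [hlen', List.take_length] at hF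
    refine absurd (eq_of_forall₂_of_sum_le hF ?_).symm hne
    rcases hkey with h | h
    · exact absurd h (by simp [hlen'])
    · exact h.2

/-- Multiplying the generator of `u` by a variable from the gaps of `u` gives an element of the
ideal generated by the earlier generators: replace the entry after the gap by this variable and
cut down to a minimal initial segment. -/
lemma colon_backward (hP2 : ∀ L L', P L → L'.Pairwise (· < ·) → List.Forall₂ (· ≤ ·) L' L → P L')
    (hP1 : ∀ L, P L → L.Pairwise (· < ·)) {a : ℕ → ℕ} {u : List ℕ}
    (hu : IsGen P u) {k : ℕ} (hk : k ∈ gapSet a u) :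
    ∃ w, IsGen P w ∧ lkey w < lkey u ∧
      monL (alphaL a w) ≤ monL (alphaL a u) + Finsupp.single k 1 := by
  have hus := hP1 u hu.1
  obtain ⟨l, hl, hk1, hk2⟩ := mem_gapSet.1 hk
  obtain ⟨i, rfl⟩ : ∃ i, k = i + a l := ⟨k - a l, by omega⟩
  have hvF : List.Forall₂ (· ≤ ·) (u.set l i) u := by
    rw [List.forall₂_iff_get]
    refine ⟨by simp, fun j h1 h2 => ?_⟩
    simp only [List.get_eq_getElem, List.getElem_set]
    split_ifs with h
    · subst h; omega
    · exact le_rfl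
  have hvs : (u.set l i).Pairwise (· < ·) := by
    rw [List.pairwise_iff_getElem]
    intro j j' hj hj' hjj
    rw [List.length_set] at hj hj'
    have h0 := lt_of_pairwise hus hjj hj'
    rw [List.getElem_set, List.getElem_set]
    split_ifs with h1 h2 h2
    · omega
    · subst h1; omega
    · subst h2
      rw [lowEnd, if_neg (by omega), List.getD_eq_getElem _ _ (by omega)] at hk1
      have := le_of_pairwise hus (show j ≤ l - 1 by omega) (by omega)
      omega
    · exact h0
  obtain ⟨e, he, hgen⟩ := exists_isGen_take (hP2 _ _ hu.1 hvs hvF)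
  refine ⟨_, hgen, ?_, ?_⟩
  · rw [lkey, lkey, Prod.Lex.toLex_lt_toLex]
    simp only [List.length_take, List.length_set] at he ⊢
    rcases he.lt_or_eq with h | h
    · left; omega
    · right
      refine ⟨by omega, ?_⟩
      rw [h, ← List.length_set (i := l) (a := i), List.take_length]
      by_contra hs
      have := eq_of_forall₂_of_sum_le hvF (not_lt.1 hs)
      have h3 : (u.set l i)[l]'(by simpa using hl) = u[l] := by simp only [this]
      rw [List.getElem_set_self] at h3
      omega
  · rw [alphaL_take]
    refine (monL_take_le _ _).trans fun x => ?_
    have hset : alphaL a (u.set l i) = (alphaL a u).set l (i + a l) := by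
      rw [alphaL, alphaL, List.mapIdx_set]
    rw [hset, Finsupp.add_apply, monL_apply, monL_apply,
      List.count_set (by rwa [length_alphaL]), Finsupp.single_apply]
    simp only [beq_iff_eq]
    split_ifs <;> omega

/-- The images under `α^a` of the generators form an ideal with linear quotients. -/
lemma linQuot_alphaL
    (hP2 : ∀ L L', P L → L'.Pairwise (· < ·) → List.Forall₂ (· ≤ ·) L' L → P L')
    (hP1 : ∀ L, P L → L.Pairwise (· < ·)) {a : ℕ → ℕ} (ha : Monotone a)
    {G : Finset (List ℕ)} (hG : ∀ L, L ∈ G ↔ IsGen P L) :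
    LinQuot G lkey (fun L => monL (alphaL a L)) (gapSet a) where
  deg w _ u _ h := by
    rw [degMon_monL, degMon_monL, length_alphaL, length_alphaL]
    rw [lkey, lkey, Prod.Lex.toLex_le_toLex] at h
    rcases h with h | h <;> simp at h <;> omega
  colon u hu s hs hus hlow hup c := by
    constructor
    · rintro ⟨w, hw, hle⟩
      exact colon_forward hP2 hP1 ha ((hG u).1 hu) ((hG w).1 (hs hw))
        (fun h => hus (h ▸ hw)) (hup w hw) hle
    · rintro ⟨k, hk, hc⟩
      obtain ⟨w, hw, hlt, hle⟩ := colon_backward hP2 hP1 ((hG u).1 hu) hk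
      refine ⟨w, hlow w ((hG w).2 hw) hlt, hle.trans (add_le_add le_rfl ?_)⟩
      rw [Finsupp.single_le_iff]
      omega

end Lists
end SqueezedSpheres

namespace SqueezedSpheres

/-! ### Squarefree strongly stable ideals -/

section Stable
variable (K : Type) [Field K]

/-- `L` lists, in strictly increasing order, the indices of a squarefree monomial of `I`. -/
def ListMem (I : Ideal (MvPolynomial ℕ K)) (L : List ℕ) : Prop :=
  L.Pairwise (· < ·) ∧ memMon K I (monL L)

lemma monL_sortedIdx (u : Mon) : monL (sortedIdx u) = u := by
  rw [monL, sortedIdx, Multiset.sort_eq, Finsupp.toMultiset_toFinsupp]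

lemma sortedIdx_monL {L : List ℕ} (hL : L.Pairwise (· < ·)) : sortedIdx (monL L) = L := by
  rw [sortedIdx, monL, Multiset.toFinsupp_toMultiset, Multiset.coe_sort]
  exact List.mergeSort_of_pairwise (hL.imp fun h => by simpa using h.le)

lemma sqfreeMon_monL {L : List ℕ} (hL : L.Pairwise (· < ·)) : sqfreeMon (monL L) := fun k => by
  rw [monL_apply]
  exact List.nodup_iff_count_le_one.1 (hL.imp fun h => h.ne) k

lemma pairwise_sortedIdx {u : Mon} (hu : sqfreeMon u) : (sortedIdx u).Pairwise (· < ·) := by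
  have hnd : (sortedIdx u).Nodup := by
    rw [List.nodup_iff_count_le_one]
    intro k
    rw [← monL_apply, monL_sortedIdx]
    exact hu k
  have hle : (sortedIdx u).Pairwise (· ≤ ·) := Multiset.pairwise_sort _ _
  exact (hle.and hnd).imp fun h => lt_of_le_of_ne h.1 h.2

lemma pairwise_alphaL {a : ℕ → ℕ} (ha : Monotone a) {L : List ℕ} (hL : L.Pairwise (· < ·)) :
    (alphaL a L).Pairwise (· < ·) := by
  rw [List.pairwise_iff_getElem]
  intro i j hi hj hij
  rw [length_alphaL] at hi hj
  simp only [alphaL, List.getElem_mapIdx]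
  have := lt_of_pairwise hL hij hj
  have := ha hij.le
  omega

lemma memMon_of_le {I : Ideal (MvPolynomial ℕ K)} {G : Finset Mon} (hI : I = monSpan K G)
    {u v : Mon} (hu : memMon K I u) (h : u ≤ v) : memMon K I v := by
  rw [hI, memMon_monSpan] at hu ⊢
  obtain ⟨g, hg, hgu⟩ := hu
  exact ⟨g, hg, hgu.trans h⟩

variable {K} {I : Ideal (MvPolynomial ℕ K)}

lemma IsFGSqfStronglyStable.listMem (hI : IsFGSqfStronglyStable K I) (L L' : List ℕ)
    (h : ListMem K I L) (hL' : L'.Pairwise (· < ·)) (hle : List.Forall₂ (· ≤ ·) L' L) :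
    ListMem K I L' := by
  refine ⟨hL', hI.2 _ _ (sqfreeMon_monL hL') (sqfreeMon_monL h.1) h.2 ?_⟩
  rw [prec, sortedIdx_monL hL', sortedIdx_monL h.1]
  exact hle

/-- The minimal generators of a squarefree strongly stable ideal are its squarefree monomials
without proper initial segment in the ideal. -/
lemma IsFGSqfStronglyStable.mem_GSet_iff (hI : IsFGSqfStronglyStable K I) {L : List ℕ}
    (hL : L.Pairwise (· < ·)) : monL L ∈ GSet K I ↔ IsGen (ListMem K I) L := by
  obtain ⟨G, hG, hIG⟩ := hI.1
  constructor
  · intro hu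
    refine ⟨⟨hL, hu.1⟩, fun e he hP => not_mem_GSet_of_lt K hIG hP.2 ?_ hu⟩
    refine lt_of_le_of_ne (monL_take_le _ _) fun h => ?_
    have := congrArg degMon h
    rw [degMon_monL, degMon_monL, List.length_take] at this
    omega
  · intro h
    refine ⟨h.1.2, fun i hi hm => ?_⟩
    rw [Finsupp.mem_support_iff, monL_apply] at hi
    obtain ⟨k, hk, rfl⟩ := List.mem_iff_getElem.1 (List.count_pos_iff.1 (Nat.pos_of_ne_zero hi))
    -- Dropping the last variable gives a monomial preceding `u / x_i`.
    have hEs : (L.eraseIdx k).Pairwise (· < ·) := hL.sublist (List.eraseIdx_sublist _ _)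
    have hE : ListMem K I (L.eraseIdx k) := by
      refine ⟨hEs, memMon_of_le K hIG hm fun x => ?_⟩
      have hperm : ((L[k] :: L.eraseIdx k) : List ℕ).Perm L :=
        List.getElem_cons_eraseIdx_perm hk
      rw [Finsupp.tsub_apply, Finsupp.single_apply, monL_apply, monL_apply,
        ← hperm.count_eq x, List.count_cons]
      simp only [beq_iff_eq]
      split_ifs <;> omega
    refine h.2 (L.length - 1) (by omega) (hI.listMem _ _ hE
      (hL.sublist (List.take_sublist _ _)) ?_)
    rw [List.forall₂_iff_get]
    refine ⟨by simp [List.length_eraseIdx, hk], fun j h1 h2 => ?_⟩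
    simp only [List.get_eq_getElem, List.getElem_take, List.getElem_eraseIdx]
    rw [List.length_take] at h1
    split_ifs
    · exact le_rfl
    · exact le_of_pairwise hL (Nat.le_succ j) (by omega)

lemma IsFGSqfStronglyStable.sqfreeMon (hI : IsFGSqfStronglyStable K I) {u : Mon}
    (hu : u ∈ GSet K I) : sqfreeMon u := by
  obtain ⟨G, hG, hIG⟩ := hI.1
  exact hG u (GSet_subset K hIG hu)

lemma alphaMap_eq (a : ℕ → ℕ) (u : Mon) : alphaMap a u = monL (alphaL a (sortedIdx u)) := rfl

lemma alphaMap_zero (u : Mon) : alphaMap (fun _ => 0) u = u := by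
  have : alphaL (fun _ => 0) (sortedIdx u) = sortedIdx u := by
    apply List.ext_getElem <;> simp [alphaL]
  rw [alphaMap_eq, this, monL_sortedIdx]

/-- The graded Betti numbers of `α^a(I)`, in a form whose dependence on `a` is confined to the
cardinality of `gapSet`. -/
lemma IsFGSqfStronglyStable.exists_betti (hI : IsFGSqfStronglyStable K I) :
    ∃ G : Finset (List ℕ), (∀ L ∈ G, L.Pairwise (· < ·)) ∧
      ∀ a : ℕ → ℕ, Monotone a → ∀ i j, betti K (sigmaIdeal K (alphaMap a) I) i j =
        ∑ L ∈ G, if L.length + i = j then (gapSet a L).card.choose i else 0 := by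
  obtain ⟨G, hG, hIG⟩ := hI.1
  have hfin : (GSet K I).Finite := G.finite_toSet.subset (GSet_subset K hIG)
  have hmem : ∀ L, L ∈ hfin.toFinset.image sortedIdx ↔ IsGen (ListMem K I) L := by
    intro L
    simp only [Finset.mem_image, Set.Finite.mem_toFinset]
    constructor
    · rintro ⟨u, hu, rfl⟩
      rw [← hI.mem_GSet_iff (pairwise_sortedIdx (hI.sqfreeMon hu)), monL_sortedIdx]
      exact hu
    · intro h
      exact ⟨monL L, (hI.mem_GSet_iff h.1.1).2 h, sortedIdx_monL h.1.1⟩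
  refine ⟨_, fun L hL => ((hmem L).1 hL).1.1, fun a ha i j => ?_⟩
  rw [betti_of_linQuot K (linQuot_alphaL hI.listMem (fun L h => h.1) ha hmem)]
  · simp only [degMon_monL, length_alphaL]
  · rw [sigmaIdeal, monSpan]
    congr 1
    ext p
    simp [alphaMap_eq]

lemma sigmaIdeal_alphaMap_zero (hI : IsFGSqfStronglyStable K I) :
    sigmaIdeal K (alphaMap fun _ => 0) I = I := by
  obtain ⟨G, hG, hIG⟩ := hI.1
  simp only [sigmaIdeal, alphaMap_zero]
  apply le_antisymm
  · rw [Ideal.span_le]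
    rintro _ ⟨u, hu, rfl⟩
    exact hu.1
  · conv_lhs => rw [hIG, monSpan]
    rw [Ideal.span_le]
    rintro _ ⟨u, hu, rfl⟩
    refine (memMon_span_iff K (GSet K I) u).2 (exists_GSet_le K ?_)
    rw [hIG, memMon_monSpan]
    exact ⟨u, hu, le_rfl⟩

end Stable
end SqueezedSpheres

namespace SqueezedSpheres

/-- **Proposition (Murai, Prop. 7.6).** For a nondecreasing sequence
`a = (0, a₁, a₂, …)` of integers, the map `α^a : M_[∞] → M_[∞]` is a squarefree
stable operator. -/
theorem alphaMap_isSqfStableOperator (K : Type) [Field K] [Infinite K]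
    (a : ℕ → ℕ) (ha0 : a 0 = 0) (ha : Monotone a) :
    IsSqfStableOperator K (alphaMap a) := by
  refine ⟨fun I hI u hu => ?_, fun I hI i j => ?_, fun J I hJ hI hle => ?_⟩
  · exact sqfreeMon_monL (pairwise_alphaL ha (pairwise_sortedIdx (hI.sqfreeMon hu)))
  · obtain ⟨G, hG, hb⟩ := hI.exists_betti
    have h0 := hb (fun _ => 0) monotone_const i j
    rw [sigmaIdeal_alphaMap_zero hI] at h0
    rw [h0, hb a ha]
    refine Finset.sum_congr rfl fun L hL => ?_
    rw [card_gapSet ha (hG L hL), card_gapSet monotone_const (hG L hL)]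
  · rw [sigmaIdeal, Ideal.span_le]
    rintro _ ⟨u, hu, rfl⟩
    -- `α^a` need not preserve divisibility, but it does so for initial segments, and some
    -- initial segment of `u` is a generator of `I`.
    have hus := pairwise_sortedIdx (hJ.sqfreeMon hu)
    have huI : ListMem K I (sortedIdx u) := ⟨hus, by rw [monL_sortedIdx]; exact hle hu.1⟩
    obtain ⟨e, -, hgen⟩ := exists_isGen_take huI
    have hmem := (hI.mem_GSet_iff hgen.1.1).2 hgen
    have hdiv : alphaMap a (monL ((sortedIdx u).take e)) ≤ alphaMap a u := by
      rw [alphaMap_eq, alphaMap_eq, sortedIdx_monL hgen.1.1, alphaL_take]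
      exact monL_take_le _ _
    have key := (memMon_span_iff K (alphaMap a '' GSet K I) (alphaMap a u)).2
      ⟨_, ⟨_, hmem, rfl⟩, hdiv⟩
    rw [Set.image_image] at key
    exact key

end SqueezedSpheres
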